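/- arXiv:1903.12082 — 3 statements merged into one kernel-verified Lean document; each statement's English description precedes it below -/
import Mathlib

section
/- For every integer k ≥ 2, every fixed graph G with chromatic number χ(G) ≥ 2, and every ε > 0, there exists n₀ such that for all n ≥ n₀, êx_k(n,G) ≤ (1 − 1/(χ(G)−1) + ε) · C(n,2). -/
/-- A hypergraph `H` (given by its finite collection of hyperedges on vertex type `β`)
contains a Berge copy of the graph `G`: there is an injection of the vertices of `G`
and an injection of the edges of `G` into hyperedges of `H` such that each edge of `G`
is contained in its corresponding hyperedge. -/
def HasBergeCopy {α β : Type*} [DecidableEq β] (G : SimpleGraph α)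
    (H : Finset (Finset β)) : Prop :=
  ∃ (i : α → β) (f : Sym2 α → Finset β),
    Function.Injective i ∧ Set.InjOn f G.edgeSet ∧
    (∀ e ∈ G.edgeSet, f e ∈ H) ∧
    (∀ u v, G.Adj u v → i u ∈ f s(u, v) ∧ i v ∈ f s(u, v))

/-- The edge set of the shadow graph of a hypergraph `H`: all 2-element subsets of
vertices covered by some hyperedge of `H`. -/
def covPairs {β : Type*} [DecidableEq β] (H : Finset (Finset β)) : Finset (Finset β) :=
  H.biUnion fun h => Finset.powersetCard 2 h

/-- The `R`-cover Turán number `êx_R(n, G)`: the maximum number of edges in the shadow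
of a Berge-`G`-free `R`-graph on `n` vertices. -/
noncomputable def coverTuranNumber {α : Type*} (R : Set ℕ) (n : ℕ)
    (G : SimpleGraph α) : ℕ :=
  sSup { m | ∃ H : Finset (Finset (Fin n)),
    (∀ h ∈ H, h.card ∈ R) ∧ ¬ HasBergeCopy G H ∧ m = (covPairs H).card }

/-!
If the shadow of `H` contains the blow-up of `G` with parts of size `t`, choose one representative
of each vertex of `G` from its part, and for each edge of `G` a hyperedge covering the two
representatives of its ends. These hyperedges form a Berge copy of `G` as soon as none of them
contains a third representative, since they are then pairwise distinct. For a given edge and third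
vertex, a random choice fails with probability at most `k / t`, where `k` bounds the sizes of the
hyperedges, so for large `t` some choice works. Hence the shadow of a Berge-`G`-free hypergraph
omits a fixed blow-up of `G`, which is still `χ(G)`-colorable, and the bound is the
Erdős–Stone–Simonovits theorem. The latter follows from its minimum degree version: deleting a
vertex of minimum degree shows that `ex(n + 1) - ex(n) ≤ c (n + 1)` for large `n`, and these
inequalities telescope.
-/

section

open Filter Finset Function SimpleGraph Topology

section UnionBound

variable {α β ι : Type*}

theorem card_filter_apply_mem_mul_card_le [Fintype α] [DecidableEq α] [Fintype β] [DecidableEq β]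
    {c : α} {S : (α → β) → Finset β} (hS : DependsOn S {c}ᶜ) {k : ℕ} (hk : ∀ φ, #(S φ) ≤ k) :
    #{φ | φ c ∈ S φ} * Fintype.card β ≤ k * Fintype.card β ^ Fintype.card α := by
  let restrict : (α → β) → {a // a ≠ c} → β := fun φ a ↦ φ a
  have card_fiber_le : ∀ ψ ∈ image restrict {φ | φ c ∈ S φ},
      #{φ ∈ {φ | φ c ∈ S φ} | restrict φ = ψ} ≤ k := by
    intro ψ hψ
    obtain ⟨φ₀, -, rfl⟩ := mem_image.1 hψ
    refine (card_le_card_of_injOn (fun φ ↦ φ c) ?_ ?_).trans (hk φ₀)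
    · intro φ hφ
      obtain ⟨hφ, heq⟩ : φ c ∈ S φ ∧ restrict φ = restrict φ₀ := by simpa using hφ
      rwa [hS fun a ha ↦ congrFun heq ⟨a, ha⟩] at hφ
    · intro φ hφ ψ hψ hc
      have heq : restrict φ = restrict ψ := (mem_filter.1 hφ).2.trans (mem_filter.1 hψ).2.symm
      funext a
      obtain rfl | ha := eq_or_ne a c
      · exact hc
      · exact congrFun heq ⟨a, ha⟩
  have card_image_le : #(image restrict {φ | φ c ∈ S φ}) ≤
      Fintype.card β ^ (Fintype.card α - 1) := by
    simpa using card_le_univ (image restrict {φ | φ c ∈ S φ})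
  calc #{φ | φ c ∈ S φ} * Fintype.card β
      ≤ k * Fintype.card β ^ (Fintype.card α - 1) * Fintype.card β := by
        gcongr
        exact (card_le_mul_card_image _ k card_fiber_le).trans (by gcongr)
    _ = k * Fintype.card β ^ Fintype.card α := by
        rw [mul_assoc, pow_sub_one_mul (Fintype.card_pos_iff.2 ⟨c⟩).ne']

theorem exists_forall_apply_notMem [Finite α] [Finite β] [Finite ι] {c : ι → α}
    {S : ι → (α → β) → Finset β} (hS : ∀ j, DependsOn (S j) {c j}ᶜ) {k : ℕ}
    (hk : ∀ j φ, #(S j φ) ≤ k) (hβ : Nat.card ι * k < Nat.card β) :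
    ∃ φ : α → β, ∀ j, φ (c j) ∉ S j φ := by
  classical
  have := Fintype.ofFinite α
  have := Fintype.ofFinite β
  have := Fintype.ofFinite ι
  simp only [Nat.card_eq_fintype_card] at hβ
  by_contra! hbad
  have cover : (univ : Finset (α → β)) ⊆ univ.biUnion fun j ↦ {φ | φ (c j) ∈ S j φ} := by
    intro φ _
    simpa using hbad φ
  have card_le : Fintype.card β ^ Fintype.card α ≤ ∑ j, #{φ | φ (c j) ∈ S j φ} := by
    simpa using (card_le_card cover).trans card_biUnion_le
  have hpos : 0 < Fintype.card β := by omega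
  refine lt_irrefl (Fintype.card β ^ Fintype.card α * Fintype.card β) ?_
  calc Fintype.card β ^ Fintype.card α * Fintype.card β
      ≤ (∑ j, #{φ | φ (c j) ∈ S j φ}) * Fintype.card β := by gcongr
    _ = ∑ j, #{φ | φ (c j) ∈ S j φ} * Fintype.card β := sum_mul _ _ _
    _ ≤ ∑ _j : ι, k * Fintype.card β ^ Fintype.card α :=
        sum_le_sum fun j _ ↦ card_filter_apply_mem_mul_card_le (hS j) (hk j)
    _ = Fintype.card β ^ Fintype.card α * (Fintype.card ι * k) := by
        rw [sum_const, card_univ, smul_eq_mul]; ring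
    _ < Fintype.card β ^ Fintype.card α * Fintype.card β := by gcongr

end UnionBound

section Berge

variable {α β : Type*}

/-- The shadow `∂H` as a simple graph; its edges are the pairs in `covPairs H`. -/
def shadowGraph (H : Finset (Finset β)) : SimpleGraph β where
  Adj u v := u ≠ v ∧ ∃ h ∈ H, u ∈ h ∧ v ∈ h
  symm := ⟨fun _ _ ⟨hne, h, hh, hu, hv⟩ ↦ ⟨hne.symm, h, hh, hv, hu⟩⟩
  loopless := ⟨fun _ h ↦ h.1 rfl⟩

theorem exists_hyperedge_of_mem_edgeSet_shadowGraph {H : Finset (Finset β)} {e : Sym2 β}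
    (he : e ∈ (shadowGraph H).edgeSet) : ∃ h ∈ H, ∀ x ∈ e, x ∈ h := by
  induction e with | _ u v
  obtain ⟨-, h, hh, hu, hv⟩ := he
  exact ⟨h, hh, by simp [hu, hv]⟩

theorem card_covPairs_le_card_edgeFinset_shadowGraph [DecidableEq β] (H : Finset (Finset β))
    [Fintype (shadowGraph H).edgeSet] : #(covPairs H) ≤ #(shadowGraph H).edgeFinset := by
  suffices covPairs H ⊆ (shadowGraph H).edgeFinset.image Sym2.toFinset from
    (card_le_card this).trans card_image_le
  intro s hs
  obtain ⟨h, hh, hs⟩ := mem_biUnion.1 hs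
  obtain ⟨hsub, hcard⟩ := mem_powersetCard.1 hs
  obtain ⟨u, v, huv, rfl⟩ := card_eq_two.1 hcard
  have hadj : (shadowGraph H).Adj u v := ⟨huv, h, hh, hsub (by simp), hsub (by simp)⟩
  exact mem_image.2 ⟨s(u, v), mem_edgeFinset.2 hadj, Sym2.toFinset_mk_eq⟩

theorem HasBergeCopy.of_forall_mem_iff [DecidableEq β] {G : SimpleGraph α}
    {H : Finset (Finset β)} {i : α → β} {f : Sym2 α → Finset β} (hi : Injective i)
    (hf : ∀ e ∈ G.edgeSet, f e ∈ H) (hmem : ∀ e ∈ G.edgeSet, ∀ a, i a ∈ f e ↔ a ∈ e) :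
    HasBergeCopy G H := by
  refine ⟨i, f, hi, fun e he e' he' heq ↦ Sym2.ext fun a ↦ ?_, hf, fun u v huv ↦ ?_⟩
  · rw [← hmem e he, heq, hmem e' he']
  · simp [hmem s(u, v) huv]

/-- The blow-up of `G`: every vertex is replaced by an independent copy of `ι`, every edge by a
complete bipartite graph. -/
def blowUp (G : SimpleGraph α) (ι : Type*) : SimpleGraph (α × ι) :=
  G.comap Prod.fst

theorem hasBergeCopy_of_blowUp_isContained [Finite α] [DecidableEq β] {ι : Type*} [Finite ι]
    {G : SimpleGraph α} {H : Finset (Finset β)} {k : ℕ} (hH : ∀ h ∈ H, #h ≤ k)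
    (hι : Nat.card (G.edgeSet × α) * k < Nat.card ι) (hG : blowUp G ι ⊑ shadowGraph H) :
    HasBergeCopy G H := by
  classical
  obtain ⟨g⟩ := hG
  choose! F hFH hF using fun e ↦ exists_hyperedge_of_mem_edgeSet_shadowGraph (H := H) (e := e)
  let i : (α → ι) → α → β := fun φ a ↦ g (a, φ a)
  have hi φ : Injective (i φ) := fun a b hab ↦ congrArg Prod.fst (g.injective hab)
  have hedge φ : ∀ e ∈ G.edgeSet, e.map (i φ) ∈ (shadowGraph H).edgeSet := by
    intro e he
    induction e with | _ a b
    exact g.toHom.map_adj (show (blowUp G ι).Adj (a, φ a) (b, φ b) from he)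
  -- For `p = (e, c)`, the set `S p φ` consists of the values of `φ c` that would put the vertex `c`
  -- into the hyperedge chosen for `e`. As `c ∉ e`, that hyperedge does not depend on `φ c`.
  let J := {p : G.edgeSet × α // p.2 ∉ p.1.1}
  have := Fintype.ofFinite ι
  let S : J → (α → ι) → Finset ι := fun p φ ↦ {x | g (p.1.2, x) ∈ F (p.1.1.1.map (i φ))}
  have dependsOn_S (p : J) : DependsOn (S p) {p.1.2}ᶜ := by
    intro φ ψ h
    have hmap : p.1.1.1.map (i φ) = p.1.1.1.map (i ψ) :=
      Sym2.map_congr fun a ha ↦ congrArg (fun x ↦ g (a, x)) <|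
        h a (ne_of_mem_of_not_mem ha p.2)
    simp only [S, hmap]
  have card_S_le (p : J) φ : #(S p φ) ≤ k := by
    refine (card_le_card_of_injOn (fun x ↦ g (p.1.2, x)) (by simp [S, Set.MapsTo]) ?_).trans
      (hH _ (hFH _ (hedge φ _ p.1.1.2)))
    exact fun x _ y _ hxy ↦ congrArg Prod.snd (g.injective hxy)
  have card_J_mul_lt : Nat.card J * k < Nat.card ι :=
    lt_of_le_of_lt (by gcongr; exact Finite.card_subtype_le _) hι
  obtain ⟨φ, hφ⟩ := exists_forall_apply_notMem dependsOn_S card_S_le card_J_mul_lt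
  refine .of_forall_mem_iff (hi φ) (f := fun e ↦ F (e.map (i φ)))
    (fun e he ↦ hFH _ (hedge φ e he)) fun e he a ↦ ⟨fun ha ↦ ?_, fun ha ↦ ?_⟩
  · by_contra hae
    exact hφ ⟨(⟨e, he⟩, a), hae⟩ (by simpa [S] using ha)
  · exact hF _ (hedge φ e he) _ (Sym2.mem_map.2 ⟨a, ha, rfl⟩)

theorem exists_coverTuranNumber_le_extremalNumber_blowUp [Finite α] (G : SimpleGraph α)
    {R : Set ℕ} (hR : BddAbove R) :
    ∃ t, ∀ n, coverTuranNumber R n G ≤ extremalNumber n (blowUp G (Fin t)) := by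
  classical
  obtain ⟨k, hk⟩ := hR
  refine ⟨Nat.card (G.edgeSet × α) * k + 1, fun n ↦ csSup_le' ?_⟩
  rintro _ ⟨H, hH, hfree, rfl⟩
  refine (card_covPairs_le_card_edgeFinset_shadowGraph H).trans ?_
  suffices (blowUp G _).Free (shadowGraph H) by
    simpa using card_edgeFinset_le_extremalNumber this
  exact fun hG ↦ hfree <|
    hasBergeCopy_of_blowUp_isContained (fun h hh ↦ hk (hH h hh)) (by simp) hG

end Berge

section ErdosStone

variable {W : Type*} {F : SimpleGraph W}

theorem extremalNumber_succ_le_add_of_minDegree {n : ℕ} {d : ℝ} (hd : 0 ≤ d)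
    (h : ∀ {Γ : SimpleGraph (Fin (n + 1))} [DecidableRel Γ.Adj], d ≤ Γ.minDegree → F ⊑ Γ) :
    (extremalNumber (n + 1) F : ℝ) ≤ extremalNumber n F + d := by
  classical
  suffices (extremalNumber (Fintype.card (Fin (n + 1))) F : ℝ) ≤ extremalNumber n F + d by
    simpa using this
  rw [extremalNumber_le_iff_of_nonneg F (by positivity)]
  intro Γ _ hfree
  have hδ : (Γ.minDegree : ℝ) < d := lt_of_not_ge fun hle ↦ hfree (h hle)
  obtain ⟨v, hv⟩ := Γ.exists_minimal_degree_vertex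
  have hdel : #Γ.edgeFinset - Γ.minDegree ≤ extremalNumber n F := by
    simpa [card_edgeFinset_deleteIncidenceSet, ← hv] using
      card_edgeFinset_deleteIncidenceSet_le_extremalNumber hfree v
  have hcard : (#Γ.edgeFinset : ℝ) ≤ extremalNumber n F + Γ.minDegree := by
    exact_mod_cast Nat.sub_le_iff_le_add.1 hdel
  linarith

theorem tendsto_add_mul_succ_choose_two_div_choose_two (E c : ℝ) :
    Tendsto (fun n : ℕ ↦ (E + c * ((n + 1).choose 2 : ℝ)) / (n.choose 2 : ℝ)) atTop (𝓝 c) := by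
  have choose_tendsto : Tendsto (fun n : ℕ ↦ (n.choose 2 : ℝ)) atTop atTop := by
    refine tendsto_natCast_atTop_atTop.comp (tendsto_atTop_mono' _ ?_ (tendsto_sub_atTop_nat 1))
    filter_upwards [eventually_ge_atTop 2] with n hn
    rw [Nat.choose_two_right, Nat.le_div_iff_mul_le two_pos, mul_comm]
    gcongr
  have pred_tendsto : Tendsto (fun n : ℕ ↦ (n : ℝ) - 1) atTop atTop :=
    tendsto_atTop_add_const_right _ _ tendsto_natCast_atTop_atTop
  have limit : Tendsto (fun n : ℕ ↦ E / (n.choose 2 : ℝ) + c * (1 + 2 / ((n : ℝ) - 1))) atTop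
      (𝓝 (0 + c * (1 + 0))) :=
    (choose_tendsto.const_div_atTop E).add
      (((pred_tendsto.const_div_atTop 2).const_add 1).const_mul c)
  simp only [add_zero, mul_one, zero_add] at limit
  refine limit.congr' ?_
  filter_upwards [eventually_ge_atTop 2] with n hn
  have hn' : (2 : ℝ) ≤ n := mod_cast hn
  have hpred : (n : ℝ) - 1 ≠ 0 := by linarith
  rw [Nat.cast_choose_two, Nat.cast_choose_two]
  push_cast
  field_simp
  ring

theorem turanDensity_le_of_minDegree {c : ℝ} (hc : 0 ≤ c)
    (h : ∀ᶠ n : ℕ in atTop, ∀ {Γ : SimpleGraph (Fin n)} [DecidableRel Γ.Adj],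
      c * n ≤ Γ.minDegree → F ⊑ Γ) :
    turanDensity F ≤ c := by
  obtain ⟨N, hN⟩ := eventually_atTop.1 h
  let excess : ℕ → ℝ := fun n ↦ extremalNumber n F - c * ((n + 1).choose 2 : ℝ)
  have excess_antitone : AntitoneOn excess (Set.Ici N) := by
    refine antitoneOn_nat_Ici_of_succ_le fun n hn ↦ ?_
    have hstep := extremalNumber_succ_le_add_of_minDegree (by positivity) (hN (n + 1) (by omega))
    have hchoose : ((n + 2).choose 2 : ℝ) = (n + 1 : ℕ) + (n + 1).choose 2 := by
      exact_mod_cast Nat.choose_succ_succ' (n + 1) 1 |>.trans (by simp)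
    simp only [excess, hchoose]
    linarith
  refine le_of_tendsto_of_tendsto (tendsto_turanDensity F)
    (tendsto_add_mul_succ_choose_two_div_choose_two (excess N) c) ?_
  filter_upwards [eventually_ge_atTop N] with n hn
  have := excess_antitone Set.self_mem_Ici hn hn
  gcongr
  linarith

theorem turanDensity_le_of_colorable [Finite W] {r : ℕ} (hF : F.Colorable (r + 1)) :
    turanDensity F ≤ 1 - 1 / r := by
  obtain ⟨C⟩ := hF
  have := Fintype.ofFinite W
  have hcontained : F ⊑ completeEquipartiteGraph (r + 1) (Fintype.card W) :=
    isContained_completeEquipartiteGraph_of_colorable C _ fun _ ↦ Fintype.card_subtype_le _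
  have hr : (0 : ℝ) ≤ 1 - 1 / r := by
    simpa using Nat.cast_inv_le_one (α := ℝ) r
  refine le_of_forall_pos_le_add fun ε hε ↦ turanDensity_le_of_minDegree (by positivity) ?_
  filter_upwards [eventually_completeEquipartiteGraph_isContained_of_minDegree hε r
    (Fintype.card W)] with n hn Γ _ hδ
  exact hcontained.trans (hn hδ)

theorem eventually_extremalNumber_le_turanDensity_add_mul {ε : ℝ} (hε : 0 < ε) :
    ∀ᶠ n : ℕ in atTop, (extremalNumber n F : ℝ) ≤ (turanDensity F + ε) * (n.choose 2 : ℝ) := by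
  filter_upwards [(tendsto_turanDensity F).eventually_le_const (lt_add_of_pos_right _ hε),
    eventually_ge_atTop 2] with n hle hn
  rwa [div_le_iff₀ (mod_cast Nat.choose_pos hn)] at hle

end ErdosStone

theorem stmt2_general {α : Type*} [Finite α] {R : Set ℕ} (hR : BddAbove R) (G : SimpleGraph α)
    (χ : ℕ) (hG : G.Colorable χ) (hχ2 : 2 ≤ χ) (ε : ℝ) (hε : 0 < ε) :
    ∃ n₀ : ℕ, ∀ n ≥ n₀,
      (coverTuranNumber R n G : ℝ) ≤ (1 - 1 / ((χ : ℝ) - 1) + ε) * (n.choose 2 : ℝ) := by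
  obtain ⟨r, rfl⟩ : ∃ r, χ = r + 1 := ⟨χ - 1, by omega⟩
  obtain ⟨t, ht⟩ := exists_coverTuranNumber_le_extremalNumber_blowUp G hR
  have hblowUp : (blowUp G (Fin t)).Colorable (r + 1) := hG.of_hom (Hom.comap _ G)
  obtain ⟨n₀, hn₀⟩ := eventually_atTop.1 <|
    eventually_extremalNumber_le_turanDensity_add_mul (F := blowUp G (Fin t)) hε
  refine ⟨n₀, fun n hn ↦ ?_⟩
  calc (coverTuranNumber R n G : ℝ)
      ≤ extremalNumber n (blowUp G (Fin t)) := mod_cast ht n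
    _ ≤ (turanDensity (blowUp G (Fin t)) + ε) * (n.choose 2 : ℝ) := hn₀ n hn
    _ ≤ (1 - 1 / (((r + 1 : ℕ) : ℝ) - 1) + ε) * (n.choose 2 : ℝ) := by
        gcongr
        simpa using turanDensity_le_of_colorable hblowUp

end

theorem stmt2 {α : Type*} [Fintype α] (k : ℕ) (hk : 2 ≤ k) (G : SimpleGraph α)
    (χ : ℕ) (hχ : G.chromaticNumber = (χ : ℕ∞)) (hχ2 : 2 ≤ χ)
    (ε : ℝ) (hε : 0 < ε) :
    ∃ n₀ : ℕ, ∀ n ≥ n₀,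
      (coverTuranNumber {k} n G : ℝ) ≤
        (1 - 1 / ((χ : ℝ) - 1) + ε) * (n.choose 2 : ℝ) :=
  stmt2_general (bddAbove_singleton (a := k)) G χ
    (SimpleGraph.chromaticNumber_le_iff_colorable.1 hχ.le) hχ2 ε hε
end

section
/- Let G be a simple graph satisfying both: (1) G is triangle-free and there exists a vertex v of G such that G − v is bipartite; (2) there exists a bipartite subgraph B of G with bipartition (U₁, U₂) such that E(G) \ E(B) forms a (possibly empty) matching all of whose edges have both endpoints in one of the parts U₁ or U₂. Then π̂_3(G) = 0; that is, for every d > 0 there exists n₀ such that every 3-uniform hypergraph H on n ≥ n₀ vertices whose shadow has at least d·C(n,2) edges contains a Berge copy of G. -/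
/-- The `k`-cover Turán density `π̂_k(G) = limsup_{n → ∞} êx_k(n, G) / C(n,2)`. -/
noncomputable def coverTuranDensity {α : Type*} (k : ℕ) (G : SimpleGraph α) : ℝ :=
  Filter.limsup
    (fun n : ℕ => (coverTuranNumber {k} n G : ℝ) / (n.choose 2 : ℝ)) Filter.atTop

/-!
Colour the vertices of `H` at random with three colours. A positive fraction of the covered pairs
receives colours `0, 1` and extends to a hyperedge by an apex of colour `2`; this gives a dense set
`F` of pairs `(x, y)` with an apex `g (x, y)`, in which distinct pairs lie in distinct hyperedges.

Averaging produces large sets `Q`, `P` and a dense `F' ⊆ F` such that all of `Q × P`, `Q × {y}` and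
`{x} × P` lie in `F` whenever `(x, y) ∈ F'`. Take a maximal matching among the pairs of `F'` with
apex `z`, for each `z`.

* If some matching is large, embed `G` with `v` at `z`, the neighbours of `v` on the matching and
  the other vertices in `Q ∪ P`: an edge at `v` is carried by a hyperedge through `z`, every other
  edge by its own pair in `F`.
* If all matchings are small, then on half of `F'` the apex determines one coordinate up to
  boundedly many choices, and after fixing the most popular choice this coordinate `y` is a
  function of the apex `z`. Large sets of other coordinates `x` and of apices `z` are then joined
  completely by hyperedges `{x, y z, z}`; if `S` is the part of condition (2) that contains the
  matching, embed the edges inside `S` as pairs `{y z, z}`, the remaining vertices of `S` as points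
  `y z` and the vertices outside `S` as points `x`.
-/

open Filter Finset

section Graph

variable {α : Type*} {G : SimpleGraph α}

lemma exists_set_mem_iff_notMem_of_induce_colorable_two {T : Set α}
    (h : (G.induce T).Colorable 2) :
    ∃ s : Set α, ∀ u ∈ T, ∀ w ∈ T, G.Adj u w → (u ∈ s ↔ w ∉ s) := by
  obtain ⟨C⟩ := h
  refine ⟨{u | ∃ hu : u ∈ T, C ⟨u, hu⟩ = 0}, fun u hu w hw huw => ?_⟩
  have hne : C ⟨u, hu⟩ ≠ C ⟨w, hw⟩ := C.valid huw
  simp only [Set.mem_ofPred_eq, hu, hw, exists_true_left]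
  lia

/-- Condition (2) on `G`, phrased without the bipartite subgraph `B`: the set `S` meets every
edge, and the edges inside `S` form a matching. -/
structure IsMatchingVertexCover (G : SimpleGraph α) (S : Set α) : Prop where
  isVertexCover : G.IsVertexCover S
  eq_of_adj : ∀ u ∈ S, ∀ w ∈ S, ∀ w' ∈ S, G.Adj u w → G.Adj u w' → w = w'

lemma isMatchingVertexCover_of_sdiff {B : SimpleGraph α} {S : Set α}
    (hB : ∀ u v, B.Adj u v → (u ∈ S ↔ v ∉ S))
    (hS : ∀ e ∈ G.edgeSet \ B.edgeSet, ∀ x ∈ e, x ∈ S)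
    (hM : ∀ e ∈ G.edgeSet \ B.edgeSet, ∀ e' ∈ G.edgeSet \ B.edgeSet,
      e ≠ e' → ∀ x ∈ e, x ∉ e') :
    IsMatchingVertexCover G S where
  isVertexCover u w huw := by
    by_cases hb : B.Adj u w
    · have := hB u w hb
      tauto
    · exact Or.inl (hS s(u, w) ⟨huw, hb⟩ u (Sym2.mem_mk_left u w))
  eq_of_adj u hu w hw w' hw' huw huw' := by
    have notAdj : ∀ x ∈ S, ¬ B.Adj u x := fun x hx hb => (hB u x hb).mp hu hx
    by_contra hne
    exact hM s(u, w) ⟨huw, notAdj w hw⟩ s(u, w') ⟨huw', notAdj w' hw'⟩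
      (fun h => hne (Sym2.congr_right.mp h)) u (Sym2.mem_mk_left u w) (Sym2.mem_mk_left u w')

lemma IsMatchingVertexCover.sym2_eq_of_eq_or_mem (htri : G.CliqueFree 3) {S : Set α}
    (hS : IsMatchingVertexCover G S) {u w u' w' : α} (huw : G.Adj u w) (hw : w ∈ S)
    (huw' : G.Adj u' w') (hw' : w' ∈ S) (hu : u = u' ∨ u ∈ S ∧ u' ∈ S)
    (hww' : w = w' ∨ G.Adj w w') : s(u, w) = s(u', w') := by
  rcases hu with rfl | ⟨hu, hu'⟩ <;> rcases hww' with rfl | hww'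
  · rfl
  · exact absurd hww' (G.isIndepSet_neighborSet_of_triangleFree htri u huw huw' hww'.ne)
  · rw [hS.eq_of_adj w hw u hu u' hu' huw.symm huw'.symm]
  · rw [hS.eq_of_adj w hw u hu w' hw' huw.symm hww',
      hS.eq_of_adj w' hw' u' hu' w hw huw'.symm hww'.symm, Sym2.eq_swap]

end Graph

lemma exists_representative_of_unique_partner {α : Type*} {R : α → α → Prop}
    (hsymm : ∀ {a b}, R a b → R b a) (huniq : ∀ {a b c}, R a b → R a c → b = c) :
    ∃ r : α → α, (∀ a b, r a = r b ↔ a = b ∨ R a b) ∧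
      ∀ a b, r a = r b → (r a = a ↔ r b = b) → a = b := by
  let rel : Setoid α :=
    { r := fun a b => a = b ∨ R a b
      iseqv :=
        { refl := fun a => Or.inl rfl
          symm := fun h => h.imp Eq.symm hsymm
          trans := by
            rintro a b c (rfl | hab) (rfl | hbc)
            · exact Or.inl rfl
            · exact Or.inr hbc
            · exact Or.inr hab
            · exact Or.inl (huniq (hsymm hab) hbc) } }
  let r : α → α := fun a => (Quotient.mk rel a).out
  have hr : ∀ a b, r a = r b ↔ a = b ∨ R a b := fun a b => Quotient.out_inj.trans Quotient.eq
  have rel_rep : ∀ a, a = r a ∨ R a (r a) := fun a =>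
    (hr a (r a)).mp (congrArg Quotient.out (Quotient.out_eq (Quotient.mk rel a)).symm)
  refine ⟨r, hr, fun a b hab hfix => ?_⟩
  by_cases ha : r a = a
  · rw [← ha, hab, hfix.mp ha]
  · have hRa : R a (r a) := (rel_rep a).resolve_left (Ne.symm ha)
    have hRb : R b (r b) := (rel_rep b).resolve_left fun h => ha (hfix.mpr h.symm)
    exact huniq (hsymm hRa) (hsymm (hab ▸ hRb))

section Embedding

variable {V : Type*} [DecidableEq V]

/-- The hyperedge that the apex map `g` assigns to the ordered pair `e`. -/
def apexTriple (g : V × V → V) (e : V × V) : Finset V := {e.1, e.2, g e}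

/-- `g` completes every pair of `F` to a hyperedge of `H`, and the first coordinates, the second
coordinates and the apices of `F` are pairwise disjoint sets. This is the tripartite subsystem of
`H` in which all copies are found; every pair of `F` has only one hyperedge in it. -/
structure IsApexMap (H : Finset (Finset V)) (F : Finset (V × V)) (g : V × V → V) : Prop where
  mem : ∀ e ∈ F, apexTriple g e ∈ H
  fst_ne_snd : ∀ e ∈ F, ∀ e' ∈ F, e.1 ≠ e'.2
  fst_ne_apex : ∀ e ∈ F, ∀ e' ∈ F, e.1 ≠ g e'
  snd_ne_apex : ∀ e ∈ F, ∀ e' ∈ F, e.2 ≠ g e'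

namespace IsApexMap

variable {α : Type*} {G : SimpleGraph α} {H : Finset (Finset V)} {F F' : Finset (V × V)}
  {g : V × V → V}

lemma mono (hg : IsApexMap H F g) (h : F' ⊆ F) : IsApexMap H F' g where
  mem e he := hg.mem e (h he)
  fst_ne_snd e he e' he' := hg.fst_ne_snd e (h he) e' (h he')
  fst_ne_apex e he e' he' := hg.fst_ne_apex e (h he) e' (h he')
  snd_ne_apex e he e' he' := hg.snd_ne_apex e (h he) e' (h he')

lemma swap (hg : IsApexMap H F g) :
    IsApexMap H (F.map (Equiv.prodComm V V).toEmbedding) (g ∘ Prod.swap) := by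
  have mem_swap : ∀ e ∈ F.map (Equiv.prodComm V V).toEmbedding, e.swap ∈ F :=
    fun e he => Finset.mem_map_equiv.mp he
  constructor
  · intro e he
    have := hg.mem _ (mem_swap e he)
    rwa [apexTriple, Finset.insert_comm] at this
  · exact fun e he e' he' => (hg.fst_ne_snd _ (mem_swap e' he') _ (mem_swap e he)).symm
  · exact fun e he e' he' => hg.snd_ne_apex _ (mem_swap e he) _ (mem_swap e' he')
  · exact fun e he e' he' => hg.fst_ne_apex _ (mem_swap e he) _ (mem_swap e' he')

lemma injOn_apexTriple (hg : IsApexMap H F g) : Set.InjOn (apexTriple g) F := by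
  intro e he e' he' h
  have hfst : e.1 ∈ apexTriple g e' := by rw [← h]; simp [apexTriple]
  have hsnd : e.2 ∈ apexTriple g e' := by rw [← h]; simp [apexTriple]
  simp only [apexTriple, mem_insert, mem_singleton, hg.fst_ne_snd e he e' he',
    hg.fst_ne_apex e he e' he', hg.snd_ne_apex e he e' he', (hg.fst_ne_snd e' he' e he).symm,
    or_false, false_or] at hfst hsnd
  exact Prod.ext hfst hsnd

lemma hasBergeCopy (hg : IsApexMap H F g) {i : α → V} (hi : Function.Injective i)
    (D : α → α → Prop) (p : α → α → V × V)
    (hD : ∀ u w, G.Adj u w → D u w ∨ D w u)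
    (hp : ∀ u w, D u w → p u w ∈ F)
    (hmem : ∀ u w, D u w → i u ∈ apexTriple g (p u w) ∧ i w ∈ apexTriple g (p u w))
    (hinj : ∀ u w u' w', D u w → D u' w' → p u w = p u' w' → s(u, w) = s(u', w')) :
    HasBergeCopy G H := by
  have oriented : ∀ e : Sym2 α, ∃ a : α × α, s(a.1, a.2) = e ∧ (e ∈ G.edgeSet → D a.1 a.2) := by
    intro e
    induction e with
    | _ u w =>
      by_cases h : D u w
      · exact ⟨(u, w), rfl, fun _ => h⟩
      · exact ⟨(w, u), Sym2.eq_swap, fun huw => (hD u w huw).resolve_left h⟩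
  choose a hae ha using oriented
  refine ⟨i, fun e => apexTriple g (p (a e).1 (a e).2), hi, ?_, ?_, ?_⟩
  · intro e he e' he' h
    rw [← hae e, ← hae e']
    exact hinj _ _ _ _ (ha e he) (ha e' he')
      (hg.injOn_apexTriple (hp _ _ (ha e he)) (hp _ _ (ha e' he')) h)
  · exact fun e he => hg.mem _ (hp _ _ (ha e he))
  · intro u w huw
    have h := hmem _ _ (ha s(u, w) huw)
    rcases Sym2.eq_iff.mp (hae s(u, w)) with ⟨hu, hw⟩ | ⟨hw, hu⟩
    · simpa only [hu, hw] using h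
    · simpa only [hu, hw] using h.symm

lemma hasBergeCopy_of_bipartite_off_vertex (hg : IsApexMap H F g) (htri : G.CliqueFree 3) {v : α}
    {s : Set α} (hs : ∀ u ≠ v, ∀ w ≠ v, G.Adj u w → (u ∈ s ↔ w ∉ s))
    {l r : α → V} (hl : Function.Injective l) (hr : Function.Injective r)
    (hF : ∀ u w, ¬ (G.Adj v u ∧ G.Adj v w) → (l u, r w) ∈ F)
    {z : V} (hz : ∃ e ∈ F, g e = z)
    (hlink : ∀ w, G.Adj v w → (l w, r w) ∈ F ∧ g (l w, r w) = z) :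
    HasBergeCopy G H := by
  classical
  have hlF : ∀ u, (l u, r v) ∈ F := fun u => hF u v fun h => G.irrefl h.2
  have hrF : ∀ w, (l v, r w) ∈ F := fun w => hF v w fun h => G.irrefl h.1
  obtain ⟨e, he, rfl⟩ := hz
  have hlr : ∀ u w, l u ≠ r w := fun u w => hg.fst_ne_snd _ (hlF u) _ (hrF w)
  have hlz : ∀ u, l u ≠ g e := fun u => hg.fst_ne_apex _ (hlF u) _ he
  have hrz : ∀ w, r w ≠ g e := fun w => hg.snd_ne_apex _ (hrF w) _ he
  let i : α → V := fun u => if u = v then g e else if u ∈ s then l u else r u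
  have hi : Function.Injective i := by
    intro u w huw
    simp only [i] at huw
    grind [Function.Injective]
  -- An edge at `v` is carried by the pair `(l w, r w)` with apex `z`, any other edge by its ends.
  refine hg.hasBergeCopy hi
    (fun u w => G.Adj u w ∧ w ≠ v ∧ (u = v ∨ u ∈ s ∧ w ∉ s))
    (fun u w => (l (if u = v then w else u), r w)) ?_ ?_ ?_ ?_
  · intro u w huw
    have := huw.symm
    have := huw.ne
    grind
  · rintro u w ⟨huw, -, -⟩
    split_ifs with huv
    · exact (hlink w (huv ▸ huw)).1
    · exact hF u w fun h =>
        G.isIndepSet_neighborSet_of_triangleFree htri v h.1 h.2 huw.ne huw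
  · rintro u w ⟨huw, hwv, h⟩
    by_cases huv : u = v
    · subst huv
      have := (hlink w huw).2
      simp only [i, apexTriple, if_true, hwv, if_false, this]
      split_ifs <;> simp
    · have hus := h.resolve_left huv
      simp [i, apexTriple, huv, hwv, hus]
  · rintro u w u' w' ⟨huw, hwv, h⟩ ⟨huw', hwv', h'⟩ hp
    obtain ⟨hlu, hrw⟩ := Prod.mk.inj hp
    obtain rfl := hr hrw
    have := hl hlu
    grind

lemma hasBergeCopy_of_isMatchingVertexCover (hg : IsApexMap H F g) (htri : G.CliqueFree 3)
    {S : Set α} (hS : IsMatchingVertexCover G S)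
    {q : Option α → V} (hq : Function.Injective q) {y z : α → V} (hz : Function.Injective z)
    (hF : ∀ k w, (q k, y w) ∈ F ∧ g (q k, y w) = z w) :
    HasBergeCopy G H := by
  classical
  obtain ⟨r, hr, hrinj⟩ := exists_representative_of_unique_partner
    (R := fun u w => u ∈ S ∧ w ∈ S ∧ G.Adj u w)
    (fun h => ⟨h.2.1, h.1, h.2.2.symm⟩)
    (fun h h' => hS.eq_of_adj _ h.1 _ h.2.1 _ h'.2.1 h.2.2 h'.2.2)
  have hy : Function.Injective y := fun u w h => hz <| by
    rw [← (hF none u).2, ← (hF none w).2, h]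
  have hqy : ∀ k w, q k ≠ y w := fun k w => hg.fst_ne_snd _ (hF k w).1 _ (hF k w).1
  have hqz : ∀ k w, q k ≠ z w := fun k w => by
    rw [← (hF k w).2]; exact hg.fst_ne_apex _ (hF k w).1 _ (hF k w).1
  have hyz : ∀ u w, y u ≠ z w := fun u w => by
    rw [← (hF none w).2]; exact hg.snd_ne_apex _ (hF none u).1 _ (hF none w).1
  let i : α → V := fun u =>
    if u ∈ S then (if r u = u then y (r u) else z (r u)) else q (some u)
  have hi : Function.Injective i := by
    intro u w huw
    have := hrinj u w
    simp only [i] at huw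
    grind [Function.Injective]
  have mem_of_mem_S : ∀ u ∈ S, ∀ k, i u ∈ apexTriple g (q k, y (r u)) := by
    intro u hu k
    simp only [i, hu, if_true, apexTriple, (hF k (r u)).2]
    split_ifs <;> simp
  -- An edge inside `S` is carried by `{q none, y, z}`; the point `q none` is not used by `i`.
  refine hg.hasBergeCopy hi (fun u w => G.Adj u w ∧ w ∈ S)
    (fun u w => (q (if u ∈ S then none else some u), y (r w))) ?_ ?_ ?_ ?_
  · exact fun u w huw => (hS.isVertexCover huw).symm.imp (⟨huw, ·⟩) (⟨huw.symm, ·⟩)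
  · exact fun u w _ => (hF _ _).1
  · rintro u w ⟨huw, hw⟩
    refine ⟨?_, mem_of_mem_S w hw _⟩
    by_cases hu : u ∈ S
    · rw [← (hr u w).mpr (Or.inr ⟨hu, hw, huw⟩)]
      exact mem_of_mem_S u hu _
    · simp [i, hu, apexTriple]
  · rintro u w u' w' ⟨huw, hw⟩ ⟨huw', hw'⟩ hp
    obtain ⟨hqu, hyw⟩ := Prod.mk.inj hp
    refine hS.sym2_eq_of_eq_or_mem htri huw hw huw' hw' ?_ ?_
    · have huu' := hq hqu
      split_ifs at huu' with hu hu'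
      exacts [Or.inr ⟨hu, hu'⟩, Or.inl (Option.some.inj huu')]
    · exact ((hr w w').mp (hy hyw)).imp_right fun h => h.2.2

end IsApexMap

end Embedding

section DensePairs

variable {A B : Type*} [Fintype A] [Fintype B] [DecidableEq A] [DecidableEq B]

lemma sum_fst_eq_sum_card_nsmul {M : Type*} [AddCommMonoid M] (F : Finset (A × B)) (f : A → M) :
    ∑ e ∈ F, f e.1 = ∑ a, #{p | (a, p) ∈ F} • f a := by
  rw [sum_finset_product F univ (fun a => {p | (a, p) ∈ F}) (by simp)]
  simp only [sum_const]

lemma sq_card_le_card_mul_sum_card_filter (F : Finset (A × B)) :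
    #F ^ 2 ≤ Fintype.card A * ∑ p : B, #{e ∈ F | (e.1, p) ∈ F} := by
  have hsum : ∑ p : B, #{e ∈ F | (e.1, p) ∈ F} = ∑ a, #{p | (a, p) ∈ F} ^ 2 := by
    calc ∑ p : B, #{e ∈ F | (e.1, p) ∈ F}
        = ∑ e ∈ F, #{p | (e.1, p) ∈ F} := by
          simp only [card_filter]
          exact sum_comm
      _ = ∑ a, #{p | (a, p) ∈ F} ^ 2 := by
          simp only [sum_fst_eq_sum_card_nsmul F fun a => #{p | (a, p) ∈ F}, smul_eq_mul, sq]
  have hcard : #F = ∑ a, #{p | (a, p) ∈ F} := by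
    simpa using sum_fst_eq_sum_card_nsmul (M := ℕ) F fun _ => 1
  rw [hsum, hcard]
  exact sq_sum_le_card_mul_sum_sq

lemma sq_card_le_card_mul_sum_card_filter_ne_add (F : Finset (A × B)) :
    #F ^ 2 ≤ Fintype.card A * (∑ p : B, #{e ∈ F | e.2 ≠ p ∧ (e.1, p) ∈ F} + #F) := by
  have hsplit : ∀ p, #{e ∈ F | (e.1, p) ∈ F} ≤
      #{e ∈ F | e.2 ≠ p ∧ (e.1, p) ∈ F} + #{e ∈ F | e.2 = p} := fun p => by
    refine (card_le_card fun e he => ?_).trans (card_union_le _ _)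
    simp only [mem_union, mem_filter] at he ⊢
    tauto
  calc #F ^ 2 ≤ Fintype.card A * ∑ p : B, #{e ∈ F | (e.1, p) ∈ F} :=
        sq_card_le_card_mul_sum_card_filter F
    _ ≤ Fintype.card A * ∑ p : B, (#{e ∈ F | e.2 ≠ p ∧ (e.1, p) ∈ F} + #{e ∈ F | e.2 = p}) := by
        gcongr with p
        exact hsplit p
    _ = Fintype.card A * (∑ p : B, #{e ∈ F | e.2 ≠ p ∧ (e.1, p) ∈ F} + #F) := by
        rw [sum_add_distrib, ← card_eq_sum_card_fiberwise fun e _ => mem_univ e.2]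

lemma exists_le_card_filter_ne_of_le_card [Nonempty A] [Nonempty B] {d : ℝ}
    (hdB : 2 ≤ d * Fintype.card B) {F : Finset (A × B)}
    (hF : d * (Fintype.card A * Fintype.card B) ≤ #F) :
    ∃ p, d ^ 2 / 2 * (Fintype.card A * Fintype.card B) ≤
      (#{e ∈ F | e.2 ≠ p ∧ (e.1, p) ∈ F} : ℝ) := by
  have hA : (0 : ℝ) < Fintype.card A := by exact_mod_cast Fintype.card_pos
  have hF0 : 2 * (Fintype.card A : ℝ) ≤ #F := by nlinarith
  have hsq : (#F : ℝ) ^ 2 ≤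
      Fintype.card A * (∑ p : B, (#{e ∈ F | e.2 ≠ p ∧ (e.1, p) ∈ F} : ℝ) + #F) := by
    exact_mod_cast sq_card_le_card_mul_sum_card_filter_ne_add F
  have hpow : (d * (Fintype.card A * Fintype.card B)) ^ 2 ≤ (#F : ℝ) ^ 2 :=
    pow_le_pow_left₀ (by nlinarith) hF 2
  have hsum : ∑ _p : B, d ^ 2 / 2 * (Fintype.card A * Fintype.card B) ≤
      ∑ p : B, (#{e ∈ F | e.2 ≠ p ∧ (e.1, p) ∈ F} : ℝ) := by
    rw [sum_const, card_univ, nsmul_eq_mul]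
    refine le_of_mul_le_mul_left ?_ hA
    nlinarith
  obtain ⟨p, -, hp⟩ := exists_le_of_sum_le univ_nonempty hsum
  exact ⟨p, hp⟩

lemma eventually_exists_common_snd {d : ℝ} (hd : 0 < d) (t : ℕ) :
    ∃ δ > (0 : ℝ), ∀ᶠ n : ℕ in atTop, ∀ F : Finset (Fin n × Fin n), d * n ^ 2 ≤ #F →
      ∃ P : Finset (Fin n), #P = t ∧
        δ * n ^ 2 ≤ (#{e ∈ F | e.2 ∉ P ∧ ∀ p ∈ P, (e.1, p) ∈ F} : ℝ) := by
  induction t generalizing d with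
  | zero => exact ⟨d, hd, .of_forall fun n F hF => ⟨∅, rfl, by simpa using hF⟩⟩
  | succ t ih =>
    obtain ⟨δ, hδ, hev⟩ := ih (d := d ^ 2 / 2) (by positivity)
    refine ⟨δ, hδ, ?_⟩
    filter_upwards [hev, tendsto_natCast_atTop_atTop.eventually_ge_atTop (2 / d),
      eventually_gt_atTop 0] with n hn hnd hn0 F hF
    have : Nonempty (Fin n) := ⟨⟨0, hn0⟩⟩
    obtain ⟨p, hp⟩ := exists_le_card_filter_ne_of_le_card (A := Fin n) (B := Fin n) (d := d)
      (by rwa [Fintype.card_fin, ← div_le_iff₀' hd]) (by simpa [sq] using hF)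
    obtain ⟨P, hP, hcard⟩ := hn {e ∈ F | e.2 ≠ p ∧ (e.1, p) ∈ F} (by simpa [sq] using hp)
    have hpP : p ∉ P := by
      have hpos : (0 : ℝ) < δ * n ^ 2 := by positivity
      obtain ⟨e, he⟩ := card_pos.mp (Nat.cast_pos.mp (hpos.trans_le hcard))
      exact fun hpP => (mem_filter.mp ((mem_filter.mp he).2.2 p hpP)).2.1 rfl
    refine ⟨insert p P, by rw [card_insert_of_notMem hpP, hP], hcard.trans ?_⟩
    gcongr
    intro e
    simp only [mem_filter, mem_insert]
    grind

lemma eventually_exists_common_fst {d : ℝ} (hd : 0 < d) (t : ℕ) :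
    ∃ δ > (0 : ℝ), ∀ᶠ n : ℕ in atTop, ∀ F : Finset (Fin n × Fin n), d * n ^ 2 ≤ #F →
      ∃ Q : Finset (Fin n), #Q = t ∧
        δ * n ^ 2 ≤ (#{e ∈ F | e.1 ∉ Q ∧ ∀ q ∈ Q, (q, e.2) ∈ F} : ℝ) := by
  obtain ⟨δ, hδ, hev⟩ := eventually_exists_common_snd hd t
  refine ⟨δ, hδ, hev.mono fun n hn F hF => ?_⟩
  obtain ⟨Q, hQ, hcard⟩ := hn (F.map (Equiv.prodComm _ _).toEmbedding) (by rwa [card_map])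
  refine ⟨Q, hQ, hcard.trans_eq ?_⟩
  rw [filter_map, card_map]
  simp

/-- The pairs of `F'` extend the complete bipartite system `Q ×ˢ P` inside `F`: they avoid `Q` on
the left and `P` on the right, and remain in `F` when an endpoint is replaced by a point of `Q` or
`P`. Such a frame supplies `F`-neighbours that are common to all pairs of `F'`. -/
structure IsFrame {V : Type*} (F : Finset (V × V)) (Q P : Finset V) (F' : Finset (V × V)) :
    Prop where
  prod_mem : ∀ q ∈ Q, ∀ p ∈ P, (q, p) ∈ F
  subset : F' ⊆ F
  fst_notMem : ∀ e ∈ F', e.1 ∉ Q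
  snd_notMem : ∀ e ∈ F', e.2 ∉ P
  fst_mem : ∀ e ∈ F', ∀ p ∈ P, (e.1, p) ∈ F
  snd_mem : ∀ e ∈ F', ∀ q ∈ Q, (q, e.2) ∈ F

lemma eventually_exists_isFrame {d : ℝ} (hd : 0 < d) (s t : ℕ) :
    ∃ δ > (0 : ℝ), ∀ᶠ n : ℕ in atTop, ∀ F : Finset (Fin n × Fin n), d * n ^ 2 ≤ #F →
      ∃ Q P F', #Q = s ∧ #P = t ∧ IsFrame F Q P F' ∧ δ * n ^ 2 ≤ #F' := by
  obtain ⟨δ₁, hδ₁, hsnd⟩ := eventually_exists_common_snd hd t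
  obtain ⟨δ, hδ, hfst⟩ := eventually_exists_common_fst hδ₁ s
  refine ⟨δ, hδ, ?_⟩
  filter_upwards [hsnd, hfst, eventually_gt_atTop 0] with n hnP hnQ hn F hF
  obtain ⟨P, hP, hPF⟩ := hnP F hF
  obtain ⟨Q, hQ, hQF⟩ := hnQ _ hPF
  refine ⟨Q, P, _, hQ, hP, ?_, hQF⟩
  have hpos : (0 : ℝ) < δ * n ^ 2 := by positivity
  obtain ⟨e, he⟩ := card_pos.mp (Nat.cast_pos.mp (hpos.trans_le hQF))
  simp only [mem_filter] at he
  refine ⟨fun q hq => (he.2.2 q hq).2.2, ?_, ?_, ?_, ?_, ?_⟩ <;> simp only [subset_iff, mem_filter]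
  · exact fun _ h => h.1.1
  · exact fun _ h => h.2.1
  · exact fun _ h => h.1.2.1
  · exact fun _ h => h.1.2.2
  · exact fun _ h q hq => (h.2.2 q hq).1

end DensePairs

lemma exists_subset_injOn_fst_snd_cover {A B : Type*} [DecidableEq A] [DecidableEq B]
    (L : Finset (A × B)) :
    ∃ M ⊆ L, Set.InjOn Prod.fst (M : Set (A × B)) ∧ Set.InjOn Prod.snd (M : Set (A × B)) ∧
      ∀ e ∈ L, e.1 ∈ M.image Prod.fst ∨ e.2 ∈ M.image Prod.snd := by
  induction L using Finset.induction_on with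
  | empty => exact ⟨∅, by simp⟩
  | insert e L _ ih =>
    obtain ⟨M, hML, hfst, hsnd, hcover⟩ := ih
    by_cases he : e.1 ∈ M.image Prod.fst ∨ e.2 ∈ M.image Prod.snd
    · refine ⟨M, hML.trans (subset_insert e L), hfst, hsnd, fun e' he' => ?_⟩
      rcases mem_insert.mp he' with rfl | he'
      exacts [he, hcover e' he']
    · have he' := not_or.mp he
      have heM : e ∉ M := fun h => he'.1 (mem_image_of_mem _ h)
      refine ⟨insert e M, insert_subset_insert e hML, ?_, ?_, fun e' he' => ?_⟩
      · rw [coe_insert, Set.injOn_insert (by simpa using heM), ← coe_image]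
        exact ⟨hfst, by simpa using he'.1⟩
      · rw [coe_insert, Set.injOn_insert (by simpa using heM), ← coe_image]
        exact ⟨hsnd, by simpa using he'.2⟩
      · simp only [image_insert, mem_insert]
        rcases mem_insert.mp he' with rfl | he'
        · exact Or.inl (Or.inl rfl)
        · exact (hcover e' he').imp Or.inr Or.inr

lemma exists_section_card_le_mul {E Y Z : Type*} [DecidableEq Y] [Nonempty Y]
    {F : Finset E} {f : E → Z} {h : E → Y} {C : Z → Finset Y} {m : ℕ}
    (hC : ∀ z, #(C z) ≤ m) (hF : ∀ e ∈ F, h e ∈ C (f e)) :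
    ∃ φ : Z → Y, #F ≤ m * #{e ∈ F | φ (f e) = h e} := by
  classical
  have fiber : ∀ z, ∃ y, #{e ∈ F | f e = z} ≤ m * #{e ∈ F | f e = z ∧ y = h e} := by
    intro z
    rcases (C z).eq_empty_or_nonempty with hz | hz
    · have : {e ∈ F | f e = z} = ∅ := filter_eq_empty_iff.mpr fun e he hez => by
        simpa [hez, hz] using hF e he
      simp [this]
    · obtain ⟨y, -, hy⟩ := exists_max_image (C z) (fun y => #{e ∈ F | f e = z ∧ y = h e}) hz
      refine ⟨y, ?_⟩
      calc #{e ∈ F | f e = z} ≤ #(C z) * #{e ∈ F | f e = z ∧ y = h e} := by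
            rw [mul_comm]
            refine card_le_mul_card_image_of_maps_to (f := h) ?_ _ ?_
            · exact fun e he => (mem_filter.mp he).2 ▸ hF e (mem_filter.mp he).1
            · intro y' hy'
              simpa only [filter_filter, eq_comm] using hy y' hy'
        _ ≤ m * #{e ∈ F | f e = z ∧ y = h e} := by gcongr; exact hC z
  choose φ hφ using fiber
  refine ⟨φ, ?_⟩
  have maps : Set.MapsTo f F (F.image f) := fun e he => mem_image_of_mem f he
  calc #F = ∑ z ∈ F.image f, #{e ∈ F | f e = z} := card_eq_sum_card_fiberwise maps
    _ ≤ ∑ z ∈ F.image f, m * #{e ∈ F | f e = z ∧ φ z = h e} := sum_le_sum fun z _ => hφ z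
    _ = m * #{e ∈ F | φ (f e) = h e} := by
      rw [← mul_sum, card_eq_sum_card_fiberwise (maps.mono_left (filter_subset _ F))]
      simp only [filter_filter]
      congr! 3
      grind

section ApexMap

variable {α : Type*} {G : SimpleGraph α}

lemma IsApexMap.hasBergeCopy_of_isFrame [Fintype α] {V : Type*} [DecidableEq V]
    {H : Finset (Finset V)} {F F' : Finset (V × V)} {g : V × V → V} {Q P : Finset V}
    {v : α} {s : Set α}
    (hg : IsApexMap H F g) (htri : G.CliqueFree 3)
    (hs : ∀ u ≠ v, ∀ w ≠ v, G.Adj u w → (u ∈ s ↔ w ∉ s))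
    (hframe : IsFrame F Q P F') (hQ : Fintype.card α ≤ #Q) (hP : Fintype.card α ≤ #P)
    {M : Finset (V × V)} {z : V} (hM : M ⊆ {e ∈ F' | g e = z})
    (hfst : Set.InjOn Prod.fst (M : Set (V × V))) (hsnd : Set.InjOn Prod.snd (M : Set (V × V)))
    (hcard : Fintype.card α ≤ #M) :
    HasBergeCopy G H := by
  classical
  obtain ⟨q⟩ : Nonempty (α ↪ Q) := Function.Embedding.nonempty_of_card_le (by simpa)
  obtain ⟨p⟩ : Nonempty (α ↪ P) := Function.Embedding.nonempty_of_card_le (by simpa)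
  obtain ⟨m⟩ : Nonempty (α ↪ M) := Function.Embedding.nonempty_of_card_le (by simpa)
  have hmF' : ∀ u, (m u : V × V) ∈ F' := fun u => (mem_filter.mp (hM (m u).2)).1
  have hmz : ∀ u, g (m u) = z := fun u => (mem_filter.mp (hM (m u).2)).2
  let l : α → V := fun u => if G.Adj v u then (m u : V × V).1 else q u
  let r : α → V := fun u => if G.Adj v u then (m u : V × V).2 else p u
  refine hg.hasBergeCopy_of_bipartite_off_vertex htri hs (l := l) (r := r) (z := z) ?_ ?_ ?_ ?_ ?_
  · intro u w huw
    have := fun h => m.injective (Subtype.ext (hfst (m u).2 (m w).2 h))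
    have := fun h => q.injective (Subtype.ext (a1 := q u) (a2 := q w) h)
    grind [hframe.fst_notMem]
  · intro u w huw
    have := fun h => m.injective (Subtype.ext (hsnd (m u).2 (m w).2 h))
    have := fun h => p.injective (Subtype.ext (a1 := p u) (a2 := p w) h)
    grind [hframe.snd_notMem]
  · intro u w huw
    simp only [l, r]
    split_ifs with hu hw hw
    · exact absurd ⟨hu, hw⟩ huw
    · exact hframe.fst_mem _ (hmF' u) _ (p w).2
    · exact hframe.snd_mem _ (hmF' w) _ (q u).2
    · exact hframe.prod_mem _ (q u).2 _ (p w).2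
  · exact ⟨m v, hframe.subset (hmF' v), hmz v⟩
  · intro w hw
    simp only [l, r, hw, if_true]
    exact ⟨hframe.subset (hmF' w), hmz w⟩

lemma eventually_hasBergeCopy_of_snd_mem_card_le [Finite α] {S : Set α} (htri : G.CliqueFree 3)
    (hS : IsMatchingVertexCover G S) {d : ℝ} (hd : 0 < d) {m : ℕ} (hm : 0 < m) :
    ∀ᶠ n : ℕ in atTop, ∀ (H : Finset (Finset (Fin n))) (F : Finset (Fin n × Fin n))
      (g : Fin n × Fin n → Fin n) (C : Fin n → Finset (Fin n)), IsApexMap H F g →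
      (∀ z, #(C z) ≤ m) → (∀ e ∈ F, e.2 ∈ C (g e)) → d * n ^ 2 ≤ #F → HasBergeCopy G H := by
  have := Fintype.ofFinite α
  obtain ⟨δ, -, hev⟩ := eventually_exists_isFrame (d := d / m) (by positivity)
    (Fintype.card (Option α)) (Fintype.card α)
  filter_upwards [hev, eventually_gt_atTop 0] with n hn hn0 H F g C hg hC hFC hF
  have : Nonempty (Fin n) := ⟨⟨0, hn0⟩⟩
  obtain ⟨φ, hφ⟩ := exists_section_card_le_mul hC hFC
  -- On the selected pairs the apex determines the second coordinate, so `E` records pairs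
  -- (first coordinate, apex) without loss.
  let E : Finset (Fin n × Fin n) := image (fun e => (e.1, g e)) {e ∈ F | φ (g e) = e.2}
  have hcardE : #E = #{e ∈ F | φ (g e) = e.2} := by
    refine card_image_of_injOn fun e he e' he' h => ?_
    obtain ⟨hfst, hapex⟩ := Prod.mk.inj h
    refine Prod.ext hfst ?_
    rw [← (mem_filter.mp he).2, ← (mem_filter.mp he').2, hapex]
  have hE : d / m * n ^ 2 ≤ #E := by
    have : (#F : ℝ) ≤ m * #E := by rw [hcardE]; exact_mod_cast hφ
    rw [div_mul_eq_mul_div, div_le_iff₀' (by positivity)]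
    exact hF.trans this
  obtain ⟨Q, P, _, hQ, hP, hframe, -⟩ := hn E hE
  obtain ⟨q⟩ : Nonempty (Option α ↪ Q) :=
    Function.Embedding.nonempty_of_card_le (by rw [Fintype.card_coe, hQ])
  obtain ⟨z⟩ : Nonempty (α ↪ P) :=
    Function.Embedding.nonempty_of_card_le (by rw [Fintype.card_coe, hP])
  refine hg.hasBergeCopy_of_isMatchingVertexCover htri hS (q := fun k => q k)
    (y := fun w => φ (z w)) (z := fun w => z w) (Subtype.val_injective.comp q.injective)
    (Subtype.val_injective.comp z.injective) fun k w => ?_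
  obtain ⟨e, he, hqz⟩ := mem_image.mp (hframe.prod_mem _ (q k).2 _ (z w).2)
  obtain ⟨heF, hφe⟩ := mem_filter.mp he
  obtain ⟨hfst, hapex⟩ := Prod.mk.inj hqz
  have : e = (↑(q k), φ (z w)) := Prod.ext hfst (by rw [← hφe, hapex])
  exact this ▸ ⟨heF, hapex⟩

lemma eventually_hasBergeCopy_of_isApexMap [Finite α] {v : α} {s S : Set α}
    (htri : G.CliqueFree 3)
    (hs : ∀ u ≠ v, ∀ w ≠ v, G.Adj u w → (u ∈ s ↔ w ∉ s))
    (hS : IsMatchingVertexCover G S) {d : ℝ} (hd : 0 < d) :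
    ∀ᶠ n : ℕ in atTop, ∀ (H : Finset (Finset (Fin n))) (F : Finset (Fin n × Fin n))
      (g : Fin n × Fin n → Fin n), IsApexMap H F g → d * n ^ 2 ≤ #F → HasBergeCopy G H := by
  have := Fintype.ofFinite α
  obtain ⟨δ, hδ, hev⟩ := eventually_exists_isFrame hd (Fintype.card α) (Fintype.card α)
  filter_upwards [hev, eventually_hasBergeCopy_of_snd_mem_card_le htri hS (half_pos hδ)
    (Fintype.card_pos_iff.mpr ⟨v⟩)] with n hn hcov H F g hg hF
  obtain ⟨Q, P, F', hQ, hP, hframe, hF'⟩ := hn F hF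
  choose M hM hfst hsnd hmax using fun z => exists_subset_injOn_fst_snd_cover {e ∈ F' | g e = z}
  by_cases hbig : ∃ z, Fintype.card α ≤ #(M z)
  · obtain ⟨z, hz⟩ := hbig
    exact hg.hasBergeCopy_of_isFrame htri hs hframe hQ.ge hP.ge (hM z) (hfst z) (hsnd z) hz
  have hsmall : ∀ z, #(M z) ≤ Fintype.card α := fun z => (not_le.mp fun h => hbig ⟨z, h⟩).le
  let X : Finset (Fin n × Fin n) := {e ∈ F' | e.1 ∈ (M (g e)).image Prod.fst}
  let Y : Finset (Fin n × Fin n) := {e ∈ F' | e.2 ∈ (M (g e)).image Prod.snd}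
  have hXY : (#F' : ℝ) ≤ #X + #Y := by
    have : F' ⊆ X ∪ Y := fun e he => by
      simpa only [X, Y, ← filter_or, mem_filter] using
        ⟨he, hmax (g e) e (mem_filter.mpr ⟨he, rfl⟩)⟩
    exact_mod_cast (card_le_card this).trans (card_union_le X Y)
  have hgF' := hg.mono hframe.subset
  rcases le_total (#X : ℝ) #Y with h | h
  · exact hcov H Y g (fun z => (M z).image Prod.snd) (hgF'.mono (filter_subset _ _))
      (fun z => card_image_le.trans (hsmall z)) (fun e he => (mem_filter.mp he).2) (by linarith)
  · refine hcov H _ _ (fun z => (M z).image Prod.fst) (hgF'.mono (filter_subset _ _ : X ⊆ F')).swap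
      (fun z => card_image_le.trans (hsmall z)) (fun e he => ?_) (by rw [card_map]; linarith)
    exact (mem_filter.mp (mem_map_equiv.mp he)).2

end ApexMap

section Colouring

lemma card_le_mul_card_comp_eq_id {κ V : Type*} [Fintype κ] [Fintype V] [DecidableEq κ]
    [DecidableEq V] (t : κ ↪ V) :
    Fintype.card (V → κ) ≤ Fintype.card κ ^ Fintype.card κ * #{c : V → κ | c ∘ t = id} := by
  have hext : ∀ c : V → κ, Function.extend t id c ∘ t = id := fun c =>
    funext fun k => t.injective.extend_apply id c k
  let recolour : (V → κ) → (κ → κ) × {c : V → κ // c ∘ t = id} := fun c =>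
    (c ∘ t, ⟨Function.extend t id c, hext c⟩)
  have hinj : Function.Injective recolour := by
    intro c c' h
    obtain ⟨hcomp, hextend⟩ := Prod.mk.inj h
    funext x
    by_cases hx : ∃ k, t k = x
    · obtain ⟨k, rfl⟩ := hx
      exact congrFun hcomp k
    · simpa only [Function.extend_apply' _ _ _ hx] using congrFun (Subtype.mk.inj hextend) x
  simpa only [Fintype.card_prod, Fintype.card_fun, Fintype.card_subtype] using
    Fintype.card_le_of_injective recolour hinj

lemma exists_colouring_card_le_mul {ι κ V : Type*} [Fintype ι] [Fintype κ] [Nonempty κ]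
    [Finite V] [DecidableEq κ] (t : ι → κ ↪ V) :
    ∃ c : V → κ, Fintype.card ι ≤
      Fintype.card κ ^ Fintype.card κ * #{i | c ∘ t i = id} := by
  classical
  have := Fintype.ofFinite V
  have hsum : ∑ _c : V → κ, Fintype.card ι ≤
      ∑ c : V → κ, Fintype.card κ ^ Fintype.card κ * #{i | c ∘ t i = id} := by
    calc ∑ _c : V → κ, Fintype.card ι = ∑ _i : ι, Fintype.card (V → κ) := by
          simp only [sum_const, card_univ, smul_eq_mul, mul_comm]
      _ ≤ ∑ i, Fintype.card κ ^ Fintype.card κ * #{c : V → κ | c ∘ t i = id} :=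
          sum_le_sum fun i _ => card_le_mul_card_comp_eq_id (t i)
      _ = ∑ c : V → κ, Fintype.card κ ^ Fintype.card κ * #{i | c ∘ t i = id} := by
          simp only [← mul_sum, card_filter]
          rw [sum_comm]
  obtain ⟨c, -, hc⟩ := exists_le_of_sum_le univ_nonempty hsum
  exact ⟨c, hc⟩

variable {V : Type*} [DecidableEq V] {H : Finset (Finset V)}

lemma exists_embedding_of_mem_covPairs (hH : ∀ h ∈ H, #h = 3) {e : Finset V}
    (he : e ∈ covPairs H) : ∃ t : Fin 3 ↪ V, e = {t 0, t 1} ∧ {t 0, t 1, t 2} ∈ H := by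
  obtain ⟨h, hhH, heh⟩ := mem_biUnion.mp he
  obtain ⟨heh, hcard⟩ := mem_powersetCard.mp heh
  obtain ⟨x, y, hxy, rfl⟩ := card_eq_two.mp hcard
  obtain ⟨z, hz⟩ : ∃ z, h \ {x, y} = {z} := by
    rw [← card_eq_one, card_sdiff_of_subset heh, hH h hhH, hcard]
  have hzxy : z ∉ ({x, y} : Finset V) := (mem_sdiff.mp (hz ▸ mem_singleton_self z)).2
  have hxyz : h = {x, y, z} := by
    rw [← union_sdiff_of_subset heh, hz, insert_union, singleton_union]
  simp only [mem_insert, mem_singleton, not_or] at hzxy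
  refine ⟨⟨![x, y, z], ?_⟩, rfl, hxyz ▸ hhH⟩
  rw [← List.nodup_ofFn]
  simpa [hxy] using ⟨Ne.symm hzxy.1, Ne.symm hzxy.2⟩

lemma exists_isApexMap_card_covPairs_le [Finite V] (hH : ∀ h ∈ H, #h = 3) :
    ∃ F g, IsApexMap H F g ∧ #(covPairs H) ≤ 27 * #F := by
  have := Fintype.ofFinite V
  choose t ht htH using fun e : covPairs H => exists_embedding_of_mem_covPairs hH e.2
  obtain ⟨c, hc⟩ := exists_colouring_card_le_mul t
  let F : Finset (V × V) :=
    {p | c p.1 = 0 ∧ c p.2 = 1 ∧ ∃ z, c z = 2 ∧ {p.1, p.2, z} ∈ H}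
  have hF : ∀ p, p ∈ F ↔ c p.1 = 0 ∧ c p.2 = 1 ∧ ∃ z, c z = 2 ∧ {p.1, p.2, z} ∈ H := by
    simp [F]
  have apex : ∀ p : V × V, ∃ z, p ∈ F → c z = 2 ∧ {p.1, p.2, z} ∈ H := fun p => by
    by_cases hp : p ∈ F
    · obtain ⟨z, hz⟩ := ((hF p).mp hp).2.2
      exact ⟨z, fun _ => hz⟩
    · exact ⟨p.1, fun h => absurd h hp⟩
  choose g hg using apex
  refine ⟨F, g, ⟨fun e he => (hg e he).2, ?_, ?_, ?_⟩, ?_⟩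
  · exact fun e he e' he' => ne_of_apply_ne c (by simp [((hF e).mp he).1, ((hF e').mp he').2.1])
  · exact fun e he e' he' => ne_of_apply_ne c (by simp [((hF e).mp he).1, (hg e' he').1])
  · exact fun e he e' he' => ne_of_apply_ne c (by simp [((hF e).mp he).2.1, (hg e' he').1])
  have hcard : #{e | c ∘ t e = id} ≤ #F := by
    refine card_le_card_of_injOn (fun e => (t e 0, t e 1)) (fun e he => ?_) fun e _ e' _ h => ?_
    · have hce := congrFun (mem_filter.mp he).2
      exact (hF _).mpr ⟨hce 0, hce 1, t e 2, hce 2, htH e⟩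
    · obtain ⟨h0, h1⟩ := Prod.mk.inj h
      exact Subtype.ext (by rw [ht e, ht e', h0, h1])
  calc #(covPairs H) = Fintype.card (covPairs H) := (Fintype.card_coe _).symm
    _ ≤ 27 * #{e | c ∘ t e = id} := by simpa using hc
    _ ≤ 27 * #F := by gcongr

end Colouring

section CoverTuran

variable {α : Type*} {G : SimpleGraph α}

lemma coverTuranNumber_le {R : Set ℕ} {n : ℕ} {x : ℝ} (hx : 0 ≤ x)
    (h : ∀ H : Finset (Finset (Fin n)), (∀ e ∈ H, #e ∈ R) → x ≤ #(covPairs H) →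
      HasBergeCopy G H) : (coverTuranNumber R n G : ℝ) ≤ x := by
  rw [← Nat.le_floor_iff hx]
  refine csSup_le' ?_
  rintro _ ⟨H, hHR, hH, rfl⟩
  exact Nat.le_floor (le_of_not_ge fun hxH => hH (h H hHR hxH))

lemma coverTuranDensity_eq_zero {k : ℕ}
    (h : ∀ d > (0 : ℝ), ∀ᶠ n : ℕ in atTop, ∀ H : Finset (Finset (Fin n)),
      (∀ e ∈ H, #e = k) → d * n.choose 2 ≤ #(covPairs H) → HasBergeCopy G H) :
    coverTuranDensity k G = 0 := by
  refine Tendsto.limsup_eq (Metric.tendsto_nhds.mpr fun ε hε => ?_)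
  filter_upwards [h (ε / 2) (half_pos hε), eventually_ge_atTop 2] with n hn hn2
  have hpos : (0 : ℝ) < n.choose 2 := by exact_mod_cast Nat.choose_pos hn2
  rw [Real.dist_0_eq_abs, abs_of_nonneg (by positivity)]
  calc (coverTuranNumber {k} n G : ℝ) / n.choose 2 ≤ ε / 2 :=
        (div_le_iff₀ hpos).mpr (coverTuranNumber_le (by positivity) hn)
    _ < ε := half_lt_self hε

lemma eventually_hasBergeCopy [Finite α] {v : α} {s S : Set α} (htri : G.CliqueFree 3)
    (hs : ∀ u ≠ v, ∀ w ≠ v, G.Adj u w → (u ∈ s ↔ w ∉ s))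
    (hS : IsMatchingVertexCover G S) {d : ℝ} (hd : 0 < d) :
    ∀ᶠ n : ℕ in atTop, ∀ H : Finset (Finset (Fin n)),
      (∀ h ∈ H, #h = 3) → d * n.choose 2 ≤ #(covPairs H) → HasBergeCopy G H := by
  filter_upwards [
    eventually_hasBergeCopy_of_isApexMap htri hs hS (d := d / (27 * 4)) (by positivity),
    eventually_ge_atTop 2] with n hn hn2 H hH hcov
  obtain ⟨F, g, hg, hF⟩ := exists_isApexMap_card_covPairs_le hH
  have hF : (#(covPairs H) : ℝ) ≤ 27 * #F := by exact_mod_cast hF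
  have hchoose : (n : ℝ) ^ 2 / 4 ≤ n.choose 2 := by
    have : (2 : ℝ) ≤ n := by exact_mod_cast hn2
    rw [Nat.cast_choose_two]
    nlinarith
  exact hn H F g hg (by nlinarith)

end CoverTuran

theorem stmt6 {α : Type*} [Fintype α] (G : SimpleGraph α)
    (h1 : G.CliqueFree 3 ∧ ∃ v : α, (G.induce ({v}ᶜ : Set α)).Colorable 2)
    (h2 : ∃ (B : SimpleGraph α) (U : Set α), B ≤ G ∧
      (∀ u v : α, B.Adj u v → (u ∈ U ↔ v ∉ U)) ∧
      ∃ S : Set α, (S = U ∨ S = Uᶜ) ∧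
        (∀ e ∈ G.edgeSet \ B.edgeSet, ∀ x : α, x ∈ e → x ∈ S) ∧
        (∀ e ∈ G.edgeSet \ B.edgeSet, ∀ e' ∈ G.edgeSet \ B.edgeSet,
          e ≠ e' → ∀ x : α, x ∈ e → x ∉ e')) :
    coverTuranDensity 3 G = 0 ∧
      ∀ d : ℝ, 0 < d → ∃ n₀ : ℕ, ∀ n ≥ n₀, ∀ H : Finset (Finset (Fin n)),
        (∀ h ∈ H, h.card = 3) →
        d * (n.choose 2 : ℝ) ≤ ((covPairs H).card : ℝ) →
        HasBergeCopy G H := by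
  obtain ⟨htri, v, hv⟩ := h1
  obtain ⟨s, hs⟩ := exists_set_mem_iff_notMem_of_induce_colorable_two hv
  obtain ⟨B, U, -, hBU, S, hSU, hS, hM⟩ := h2
  have hBS : ∀ u w, B.Adj u w → (u ∈ S ↔ w ∉ S) := fun u w huw => by
    have := hBU u w huw
    rcases hSU with rfl | rfl
    · exact this
    · simp only [Set.mem_compl_iff]
      tauto
  have hcover : IsMatchingVertexCover G S := isMatchingVertexCover_of_sdiff hBS hS hM
  have key : ∀ d > (0 : ℝ), ∀ᶠ n : ℕ in atTop, ∀ H : Finset (Finset (Fin n)),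
      (∀ h ∈ H, #h = 3) → d * n.choose 2 ≤ #(covPairs H) → HasBergeCopy G H :=
    fun d hd => eventually_hasBergeCopy htri hs hcover hd
  exact ⟨coverTuranDensity_eq_zero key, fun d hd => eventually_atTop.mp (key d hd)⟩
end

section
/- For a simple graph G, π̂_3(G) = 0 if and only if there exists a positive integer s such that G is isomorphic to a subgraph of C₅(1,s,s,s,s) and G is also isomorphic to a subgraph of C₃(s,s,s;{{1,2}}). -/
/-- The blowup `C₅(1, s, s, s, s)` of the 5-cycle `v₁v₂v₃v₄v₅`: `v₁` (the vertex
`Sum.inl ()`) stays a single vertex, each other `vᵢ` is replaced by an independent set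
of size `s`, and every edge of the 5-cycle becomes a complete bipartite graph. -/
def C5Blowup (s : ℕ) : SimpleGraph (Unit ⊕ Fin 4 × Fin s) :=
  SimpleGraph.fromRel (fun x y =>
    match x, y with
    | Sum.inl _, Sum.inl _ => False
    | Sum.inl _, Sum.inr (i, _) => i = 0 ∨ i = 3
    | Sum.inr _, Sum.inl _ => False
    | Sum.inr (i, _), Sum.inr (i', _) => (i : ℕ) + 1 = (i' : ℕ))

/-- The generalized blowup `C₃(s, s, s; {{1,2}})` of the triangle `v₁v₂v₃`: each `vᵢ`
is replaced by an independent set of size `s`, the edges `v₁v₃` and `v₂v₃` become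
complete bipartite graphs, and the edge `v₁v₂` becomes a perfect matching. -/
def C3BlowupM (s : ℕ) : SimpleGraph (Fin 3 × Fin s) :=
  SimpleGraph.fromRel (fun x y =>
    (x.1 = 0 ∧ y.1 = 2) ∨ (x.1 = 1 ∧ y.1 = 2) ∨ (x.1 = 0 ∧ y.1 = 1 ∧ x.2 = y.2))

/-!
If the density of `G` is zero, then `G` has Berge copies in every sufficiently large 3-graph with
quadratically many shadow edges. Two such 3-graphs have few Berge subgraphs. In the triples
`{apex, x, y}` over a complete bipartite graph, a Berge copy of a triangle-free `G` unfolds into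
`C₅(1,s,s,s,s)`: each side of the bipartite graph splits according to adjacency to the preimage of
the apex. In the triples `{a_i, b_i, c_j}` the shadow is `C₃(s,s,s;{{1,2}})`, and every triangle
of it has two edges lying in one and the same hyperedge and in no other, so `G` is triangle-free
as well.

Conversely, choose for each shadow edge of a dense 3-graph a third vertex, its colour. A
tripartition which a positive proportion of these triples respects turns this into a colouring of
the edges of a dense bipartite graph, of which a positive proportion lies in many four-cycles. If
some colour class of such edges has a large matching, then dependent selection gives `2s` of its
edges and a complete bipartite graph inside the common opposite sides of their four-cycles: a
Berge `C₅(1,s,s,s,s)` whose apex is the colour. Otherwise every colour class is covered by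
boundedly many vertices; after passing to the most popular one `a v` for each colour `v`, the
Kővári–Sós–Turán theorem, applied to the pairs `(v, y)` for which `{a v, y}` has colour `v`, gives
a complete bipartite graph `S × T` on which `a` is constant or injective. In the first case there
is again a Berge `C₅(1,s,s,s,s)`; in the second the triples `{v, a v, y}` form the 3-graph `{a_i,
b_i, c_j}`, in which triangle-free subgraphs of `C₃(s,s,s;{{1,2}})` have Berge copies.
-/

open Finset
open scoped SimpleGraph

section Counting

variable {ι κ α β γ : Type*}

theorem half_mul_card_le_card_filter_half_mul_le (I : Finset ι) (w : ι → ℝ) {δ B : ℝ}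
    (hB : 0 < B) (hδ : 0 ≤ δ) (hw : ∀ i ∈ I, w i ≤ B) (h : δ * B * #I ≤ ∑ i ∈ I, w i) :
    δ / 2 * #I ≤ #{i ∈ I | δ / 2 * B ≤ w i} := by
  have hle : ∀ i ∈ I, w i ≤ (if δ / 2 * B ≤ w i then B else 0) + δ / 2 * B := fun i hi => by
    split_ifs with h'
    · have : 0 ≤ δ / 2 * B := by positivity
      linarith [hw i hi]
    · linarith
  have hsum : ∑ i ∈ I, w i ≤ B * #{i ∈ I | δ / 2 * B ≤ w i} + δ / 2 * B * #I := by
    refine (sum_le_sum hle).trans_eq ?_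
    rw [sum_add_distrib, ← sum_filter, sum_const, sum_const, nsmul_eq_mul, nsmul_eq_mul,
      mul_comm B, mul_comm (δ / 2 * B)]
  refine le_of_mul_le_mul_left ?_ hB
  linarith

theorem exists_subset_card_eq_mul_card_le_choose_mul_card (I : Finset ι) (Ω : Finset κ)
    (R : ι → κ → Prop) [∀ i w, Decidable (R i w)] {δ : ℝ} {s : ℕ} (hδ : 0 ≤ δ)
    (hI : I.Nonempty) (hsI : s ≤ #I) (hs : s ≤ δ / 2 * #I)
    (h : ∀ i ∈ I, δ * #Ω ≤ #{w ∈ Ω | R i w}) :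
    ∃ S ⊆ I, #S = s ∧ δ / 2 * #Ω ≤ (#I).choose s * (#{w ∈ Ω | ∀ i ∈ S, R i w} : ℝ) := by
  classical
  let rich : Finset κ := {w ∈ Ω | s ≤ #{i ∈ I | R i w}}
  have h_rich : δ / 2 * #Ω ≤ #rich := by
    have hcount : δ * #I * #Ω ≤ ∑ w ∈ Ω, (#{i ∈ I | R i w} : ℝ) := by
      have hsum : ∑ i ∈ I, #{w ∈ Ω | R i w} = ∑ w ∈ Ω, #{i ∈ I | R i w} :=
        sum_card_bipartiteAbove_eq_sum_card_bipartiteBelow R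
      have := card_nsmul_le_sum I _ _ h
      rw [nsmul_eq_mul, ← Nat.cast_sum, hsum, Nat.cast_sum] at this
      linarith
    refine (half_mul_card_le_card_filter_half_mul_le Ω (fun w => (#{i ∈ I | R i w} : ℝ))
      (B := #I) (mod_cast hI.card_pos) hδ (fun w _ => mod_cast card_filter_le _ _) hcount).trans ?_
    exact_mod_cast card_le_card (monotone_filter_right _ fun w _ hw => by
      exact_mod_cast hs.trans hw)
  obtain ⟨S, hS, hmax⟩ := exists_max_image (powersetCard s I)
    (fun S => #{w ∈ Ω | ∀ i ∈ S, R i w}) (powersetCard_nonempty.2 hsI)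
  obtain ⟨hSI, hSs⟩ := mem_powersetCard.1 hS
  refine ⟨S, hSI, hSs, h_rich.trans ?_⟩
  have hcover : rich ⊆ (powersetCard s I).biUnion fun S => {w ∈ Ω | ∀ i ∈ S, R i w} := by
    intro w hw
    obtain ⟨hwΩ, hsw⟩ := mem_filter.1 hw
    obtain ⟨T, hT, hTs⟩ := exists_subset_card_eq hsw
    exact mem_biUnion.2 ⟨T, mem_powersetCard.2 ⟨hT.trans (filter_subset _ _), hTs⟩,
      mem_filter.2 ⟨hwΩ, fun i hi => (mem_filter.1 (hT hi)).2⟩⟩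
  rw [← card_powersetCard]
  exact_mod_cast (card_le_card hcover).trans (card_biUnion_le_card_mul _ _ _ hmax)

theorem half_mul_card_le_card_filter_card_fiber [Fintype α] [Fintype β] [Nonempty β]
    [DecidableEq α] [DecidableEq β] (E : Finset (α × β)) {ε : ℝ} (hε : 0 ≤ ε)
    (hE : ε * (Fintype.card α * Fintype.card β) ≤ #E) :
    ε / 2 * Fintype.card α ≤ #{a | ε / 2 * Fintype.card β ≤ #{b | (a, b) ∈ E}} := by
  have hdeg : #E = ∑ a, #{b | (a, b) ∈ E} := by
    have : #E = ∑ a, ∑ b, if (a, b) ∈ E then 1 else 0 := by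
      rw [← Fintype.sum_prod_type']
      simp
    simpa using this
  refine half_mul_card_le_card_filter_half_mul_le univ (fun a => (#{b | (a, b) ∈ E} : ℝ))
    (mod_cast Fintype.card_pos) hε (fun a _ => by simpa using card_le_univ _) ?_
  rw [← Nat.cast_sum, ← hdeg, card_univ]
  linarith

/-- The **Kővári–Sós–Turán theorem**, in density form. -/
theorem exists_product_subset_of_dense {ε : ℝ} (hε : 0 < ε) (s t : ℕ) :
    ∃ n₀ : ℕ, ∀ {α β : Type*} [Fintype α] [Fintype β],
      n₀ ≤ Fintype.card α → n₀ ≤ Fintype.card β → ∀ E : Finset (α × β),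
      ε * (Fintype.card α * Fintype.card β) ≤ #E →
      ∃ (S : Finset α) (T : Finset β), #S = s ∧ #T = t ∧ S ×ˢ T ⊆ E := by
  classical
  obtain ⟨M, hM⟩ := exists_nat_ge (s + s / (ε / 2 / 2) + 1)
  obtain ⟨n₀, hn₀⟩ := exists_nat_ge (M / (ε / 2) + M.choose s * t / (ε / 2 / 2) + 1)
  have hdiv : 0 ≤ s / (ε / 2 / 2) ∧ 0 ≤ M / (ε / 2) ∧ 0 ≤ M.choose s * t / (ε / 2 / 2) :=
    ⟨by positivity, by positivity, by positivity⟩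
  have hsM : s + 1 ≤ M := by
    have : (s + 1 : ℝ) ≤ M := by linarith
    exact_mod_cast this
  have hsM' : s ≤ ε / 2 / 2 * M := by
    rw [← div_le_iff₀' (by positivity)]
    linarith
  refine ⟨n₀, fun {α β} _ _ hα hβ E hE => ?_⟩
  have hα' : (n₀ : ℝ) ≤ Fintype.card α := mod_cast hα
  have hβ' : (n₀ : ℝ) ≤ Fintype.card β := mod_cast hβ
  have hMα : M ≤ ε / 2 * Fintype.card α := by
    rw [← div_le_iff₀' (by positivity)]
    linarith
  have htβ : M.choose s * t ≤ ε / 2 / 2 * Fintype.card β := by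
    rw [← div_le_iff₀' (by positivity)]
    linarith
  have hβpos : (0 : ℝ) < Fintype.card β := by linarith
  have : Nonempty β := Fintype.card_pos_iff.1 (mod_cast hβpos)
  have hrich := half_mul_card_le_card_filter_card_fiber E hε.le hE
  obtain ⟨I, hI, hIM⟩ := exists_subset_card_eq (by exact_mod_cast hMα.trans hrich)
  obtain ⟨S, -, hSs, hS⟩ := exists_subset_card_eq_mul_card_le_choose_mul_card I univ
    (fun a b => (a, b) ∈ E) (δ := ε / 2) (s := s) (by positivity) (card_pos.1 (by omega))
    (by omega) (by rwa [hIM]) (fun a ha => by simpa only [card_univ] using (mem_filter.1 (hI ha)).2)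
  rw [hIM, card_univ] at hS
  have hpos : (0 : ℝ) < M.choose s := mod_cast Nat.choose_pos (by omega)
  obtain ⟨T, hT, hTt⟩ := exists_subset_card_eq
    (by exact_mod_cast le_of_mul_le_mul_left (htβ.trans hS) hpos)
  refine ⟨S, T, hSs, hTt, fun p hp => ?_⟩
  obtain ⟨hpS, hpT⟩ := mem_product.1 hp
  have hadj := hT hpT
  simp only [mem_filter_univ] at hadj
  exact hadj _ hpS

/-- The edges of the bipartite graph `E` opposite to `e` in a (possibly degenerate) four-cycle. -/
def oppositeEdges [DecidableEq α] [DecidableEq β] (E : Finset (α × β)) (e : α × β) :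
    Finset (α × β) :=
  {p ∈ E | (e.1, p.2) ∈ E ∧ (p.1, e.2) ∈ E}

theorem oppositeEdges_subset [DecidableEq α] [DecidableEq β] (E : Finset (α × β)) (e : α × β) :
    oppositeEdges E e ⊆ E :=
  filter_subset _ _

theorem card_pow_four_le_mul_sum_card_oppositeEdges [Fintype α] [Fintype β] [DecidableEq α]
    [DecidableEq β] (E : Finset (α × β)) :
    #E ^ 4 ≤ (Fintype.card α * Fintype.card β) ^ 2 * ∑ e ∈ E, #(oppositeEdges E e) := by
  let x : α → β → ℕ := fun a b => if (a, b) ∈ E then 1 else 0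
  let codeg : β × β → ℕ := fun q => ∑ a, x a q.1 * x a q.2
  have hE : ∀ w : α × β → ℕ, ∑ e ∈ E, w e = ∑ a, ∑ b, x a b * w (a, b) := fun w => by
    rw [← Fintype.sum_prod_type' fun a b => x a b * w (a, b)]
    simp [x]
  have hdeg : ∑ a, (∑ b, x a b) ^ 2 = ∑ q, codeg q := by
    simp only [codeg, sq, sum_mul_sum, Fintype.sum_prod_type]
    rw [sum_comm]
    exact sum_congr rfl fun b _ => sum_comm
  have hcodeg : ∑ q, codeg q ^ 2 = ∑ e ∈ E, #(oppositeEdges E e) := by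
    have hopp : ∀ e, #(oppositeEdges E e) = ∑ a, ∑ b, x a b * (x e.1 b * x a e.2) := by
      intro e
      rw [oppositeEdges, card_filter, hE]
      simp [x, ← ite_and, and_comm]
    calc ∑ q, codeg q ^ 2
      _ = ∑ b, ∑ b', ∑ a, ∑ a', x a b * x a b' * (x a' b * x a' b') := by
        simp only [codeg, sq, Fintype.sum_prod_type, sum_mul_sum]
      _ = ∑ b, ∑ a, ∑ a', ∑ b', x a b * x a b' * (x a' b * x a' b') :=
        sum_congr rfl fun b _ => sum_comm.trans (sum_congr rfl fun a _ => sum_comm)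
      _ = ∑ a, ∑ b, ∑ a', ∑ b', x a b * x a b' * (x a' b * x a' b') := sum_comm
      _ = ∑ e ∈ E, #(oppositeEdges E e) := by
        simp only [hE, hopp, mul_sum]
        refine sum_congr rfl fun a _ => sum_congr rfl fun b _ => sum_congr rfl fun a' _ =>
          sum_congr rfl fun b' _ => ?_
        ring
  calc #E ^ 4
    _ = ((∑ a, ∑ b, x a b) ^ 2) ^ 2 := by
      simp only [card_eq_sum_ones, hE, mul_one]
      ring
    _ ≤ (Fintype.card α * ∑ a, (∑ b, x a b) ^ 2) ^ 2 := by
      gcongr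
      exact sq_sum_le_card_mul_sum_sq
    _ = Fintype.card α ^ 2 * (∑ q, codeg q) ^ 2 := by rw [hdeg, mul_pow]
    _ ≤ Fintype.card α ^ 2 * (Fintype.card (β × β) * ∑ q, codeg q ^ 2) := by
      gcongr
      exact sq_sum_le_card_mul_sum_sq
    _ = _ := by rw [hcodeg, Fintype.card_prod]; ring

theorem half_sq_mul_card_le_card_filter_oppositeEdges [Fintype α] [Fintype β] [DecidableEq α]
    [DecidableEq β] (E : Finset (α × β)) {ε : ℝ} (hε : 0 < ε)
    (hE : ε * (Fintype.card α * Fintype.card β) ≤ #E) (hne : E.Nonempty) :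
    ε ^ 2 / 2 * #E ≤ #{e ∈ E | ε ^ 2 / 2 * #E ≤ #(oppositeEdges E e)} := by
  have hpos : (0 : ℝ) < #E := mod_cast hne.card_pos
  refine half_mul_card_le_card_filter_half_mul_le E (fun e => (#(oppositeEdges E e) : ℝ)) hpos
    (by positivity) (fun e _ => mod_cast card_le_card (oppositeEdges_subset E e)) ?_
  let K : ℝ := Fintype.card α * Fintype.card β
  let W : ℝ := ∑ e ∈ E, (#(oppositeEdges E e) : ℝ)
  have hcount : (#E : ℝ) ^ 4 ≤ K ^ 2 * W := by
    simp only [K, W]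
    exact_mod_cast card_pow_four_le_mul_sum_card_oppositeEdges E
  have hdense : ε ^ 2 * K ^ 2 ≤ (#E : ℝ) ^ 2 := by
    rw [← mul_pow]
    gcongr
  have hW0 : 0 ≤ W := by positivity
  refine le_of_mul_le_mul_left ?_ (pow_pos hpos 2)
  calc (#E : ℝ) ^ 2 * (ε ^ 2 * #E * #E) = ε ^ 2 * #E ^ 4 := by ring
    _ ≤ ε ^ 2 * (K ^ 2 * W) := by gcongr
    _ = ε ^ 2 * K ^ 2 * W := by ring
    _ ≤ #E ^ 2 * W := by gcongr

theorem exists_subset_injOn_or_eq_const [Nonempty β] (f : α → β) {m n : ℕ} {S : Finset α}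
    (hS : m * n ≤ #S) :
    (∃ T ⊆ S, #T = m ∧ Set.InjOn f T) ∨ ∃ T ⊆ S, #T = n ∧ ∃ b, ∀ x ∈ T, f x = b := by
  classical
  by_cases hfib : ∃ b, n ≤ #{x ∈ S | f x = b}
  · obtain ⟨b, hb⟩ := hfib
    obtain ⟨T, hT, hTn⟩ := exists_subset_card_eq hb
    exact .inr ⟨T, hT.trans (filter_subset _ _), hTn, b, fun x hx => (mem_filter.1 (hT hx)).2⟩
  · push Not at hfib
    have hn : 0 < n := (Nat.zero_le _).trans_lt (hfib (Classical.arbitrary β))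
    have hm : m ≤ #(S.image f) := by
      refine Nat.le_of_mul_le_mul_right (hS.trans ?_) hn
      rw [mul_comm]
      exact card_le_mul_card_image S n fun b _ => (hfib b).le
    obtain ⟨U, hU, hUm⟩ := exists_subset_card_eq hm
    obtain ⟨T, hTS, hinj, rfl⟩ := exists_subset_injOn_image_eq_of_surjOn S U
      (f := f) (fun u hu => by simpa using hU hu)
    exact .inl ⟨T, hTS, by rwa [card_image_of_injOn hinj] at hUm, hinj⟩

theorem exists_maximal_matching [DecidableEq α] [DecidableEq β] (E : Finset (α × β)) :
    ∃ m ⊆ E, Set.InjOn Prod.fst (m : Set (α × β)) ∧ Set.InjOn Prod.snd (m : Set (α × β)) ∧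
      ∀ e ∈ E, e.1 ∈ m.image Prod.fst ∨ e.2 ∈ m.image Prod.snd := by
  classical
  obtain ⟨m, hmax⟩ := ({m ∈ E.powerset |
    Set.InjOn Prod.fst (m : Set (α × β)) ∧ Set.InjOn Prod.snd (m : Set (α × β))} :
    Finset (Finset (α × β))).exists_maximal ⟨∅, by simp⟩
  have hm := hmax.prop
  simp only [mem_filter, mem_powerset] at hm
  refine ⟨m, hm.1, hm.2.1, hm.2.2, fun e he => ?_⟩
  by_contra! hfree
  have hem : e ∉ m := fun h => hfree.1 (mem_image_of_mem _ h)
  refine hem (hmax.le_of_ge (mem_filter.2 ⟨mem_powerset.2 (insert_subset he hm.1), ?_, ?_⟩)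
    (subset_insert e m) (mem_insert_self e m))
  · rw [coe_insert, Set.injOn_insert (by simpa using hem)]
    exact ⟨hm.2.1, by simpa using hfree.1⟩
  · rw [coe_insert, Set.injOn_insert (by simpa using hem)]
    exact ⟨hm.2.2, by simpa using hfree.2⟩

theorem exists_section_card_le_mul_s7 [Fintype β] [Fintype γ] [Nonempty α] [DecidableEq α]
    [DecidableEq β] [DecidableEq γ] (E : Finset (α × β)) (c : α × β → γ) {F : γ → Finset α}
    {M : ℕ} (hF : ∀ v, #(F v) ≤ M) (hE : ∀ e ∈ E, e.1 ∈ F (c e)) :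
    ∃ a : γ → α, #E ≤ M * #{p : γ × β | (a p.1, p.2) ∈ E ∧ c (a p.1, p.2) = p.1} := by
  have hpop : ∀ v, ∃ a, #{e ∈ E | c e = v} ≤ M * #{e ∈ E | c e = v ∧ e.1 = a} := fun v => by
    have hmaps : ∀ e ∈ ({e ∈ E | c e = v} : Finset (α × β)), e.1 ∈ F v := fun e he => by
      obtain ⟨heE, rfl⟩ := mem_filter.1 he
      exact hE e heE
    rcases (F v).eq_empty_or_nonempty with hempty | hne
    · have : ({e ∈ E | c e = v} : Finset (α × β)) = ∅ :=
        eq_empty_of_forall_notMem fun e he => by simpa [hempty] using hmaps e he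
      exact ⟨Classical.arbitrary α, by simp [this]⟩
    · obtain ⟨a, -, hmax⟩ := exists_max_image (F v) (fun a => #{e ∈ E | c e = v ∧ e.1 = a}) hne
      simp only [← filter_filter] at hmax ⊢
      refine ⟨a, (card_le_mul_card_image_of_maps_to hmaps _ hmax).trans ?_⟩
      rw [mul_comm]
      exact Nat.mul_le_mul_right _ (hF v)
  choose a ha using hpop
  refine ⟨a, ?_⟩
  have hfibre : ∀ v, #{e ∈ E | c e = v ∧ e.1 = a v} ≤
      #{p ∈ ({p | (a p.1, p.2) ∈ E ∧ c (a p.1, p.2) = p.1} : Finset (γ × β)) | p.1 = v} :=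
    fun v => by
      refine card_le_card_of_injOn (fun e => (v, e.2)) ?_ ?_
      · rintro ⟨x, y⟩ he
        obtain ⟨h₁, h₂, rfl⟩ := mem_filter.1 he
        simp [h₁, h₂]
      · rintro ⟨x, y⟩ he ⟨x', y'⟩ he' h
        simp_all
  rw [card_eq_sum_card_fiberwise (f := c) (t := univ) (by simp),
    card_eq_sum_card_fiberwise (f := Prod.fst) (t := univ) (by simp), mul_sum]
  exact sum_le_sum fun v _ => (ha v).trans (Nat.mul_le_mul_left _ (hfibre v))

theorem card_fun_le_card_fun_mul_card_filter_comp_eq [Fintype ι] [DecidableEq ι] [Fintype κ]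
    [DecidableEq κ] [Fintype α] [DecidableEq α] {τ : ι → α} (hτ : Function.Injective τ)
    (g : ι → κ) :
    Fintype.card (α → κ) ≤ Fintype.card (ι → κ) * #{f : α → κ | f ∘ τ = g} := by
  have : Fintype.card (α → κ) ≤ #((univ : Finset (ι → κ)).product {f : α → κ | f ∘ τ = g}) := by
    rw [← card_univ]
    refine card_le_card_of_injOn (fun f => (f ∘ τ, Function.extend τ g f)) ?_ ?_
    · intro f _
      simp [Function.extend_comp hτ]
    · intro f _ f' _ h
      obtain ⟨hτf, hext⟩ := Prod.mk.inj h
      funext z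
      by_cases hz : ∃ i, τ i = z
      · obtain ⟨i, rfl⟩ := hz
        exact congrFun hτf i
      · simpa [Function.extend_apply' _ _ _ hz] using congrFun hext z
  simpa using this

theorem exists_card_le_mul_card_filter_comp_eq [Fintype ι] [DecidableEq ι] [Fintype κ]
    [DecidableEq κ] [Nonempty κ] [Finite α] (P : Finset γ) (τ : γ → ι → α)
    (hτ : ∀ p ∈ P, Function.Injective (τ p)) (g : ι → κ) :
    ∃ f : α → κ, #P ≤ Fintype.card (ι → κ) * #{p ∈ P | f ∘ τ p = g} := by
  classical
  have := Fintype.ofFinite α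
  by_contra! hlt
  have hsum : ∑ f : α → κ, #{p ∈ P | f ∘ τ p = g} = ∑ p ∈ P, #{f : α → κ | f ∘ τ p = g} :=
    sum_card_bipartiteAbove_eq_sum_card_bipartiteBelow fun f p => f ∘ τ p = g
  have hlower : #P * Fintype.card (α → κ) ≤
      ∑ f : α → κ, Fintype.card (ι → κ) * #{p ∈ P | f ∘ τ p = g} := by
    rw [← mul_sum, hsum, mul_sum, ← smul_eq_mul]
    exact card_nsmul_le_sum _ _ _ fun p hp =>
      card_fun_le_card_fun_mul_card_filter_comp_eq (hτ p hp) g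
  have hupper := sum_lt_sum_of_nonempty (univ_nonempty (α := α → κ)) fun f _ => hlt f
  rw [sum_const, card_univ, smul_eq_mul] at hupper
  linarith

end Counting

section Containment

variable {α α' β γ D : Type*} [DecidableEq β] [DecidableEq γ] {G : SimpleGraph α}
  {H : Finset (Finset β)}

theorem HasBergeCopy.of_isContained {G' : SimpleGraph α'} (hG : G ⊑ G')
    (h : HasBergeCopy G' H) : HasBergeCopy G H := by
  obtain ⟨φ⟩ := hG
  obtain ⟨i, f, hi, hf, hfH, hmem⟩ := h
  have hedge : ∀ e ∈ G.edgeSet, e.map φ ∈ G'.edgeSet := fun _ he => φ.toHom.map_mem_edgeSet he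
  exact ⟨i ∘ φ, f ∘ Sym2.map φ, hi.comp φ.injective,
    fun e he e' he' hee' => Sym2.map.injective φ.injective (hf (hedge e he) (hedge e' he') hee'),
    fun e he => hfH _ (hedge e he), fun u v huv => hmem _ _ (φ.toHom.map_adj huv)⟩

theorem hasBergeCopy_of_edge_parametrization {i : α → β} (hi : Function.Injective i)
    (ends : D → Sym2 α) (hends : ∀ e ∈ G.edgeSet, ∃ d, ends d = e) {φ : D → Finset β}
    (hφ : Function.Injective φ) (hφH : ∀ d, φ d ∈ H) (hmem : ∀ d, ∀ x ∈ ends d, i x ∈ φ d) :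
    HasBergeCopy G H := by
  have hrep : ∀ e, ∃ h, e ∈ G.edgeSet → ∃ d, ends d = e ∧ φ d = h := fun e => by
    by_cases he : e ∈ G.edgeSet
    · obtain ⟨d, hd⟩ := hends e he
      exact ⟨φ d, fun _ => ⟨d, hd, rfl⟩⟩
    · exact ⟨∅, fun h => absurd h he⟩
  choose f hf using hrep
  refine ⟨i, f, hi, fun e he e' he' hee' => ?_, fun e he => ?_, fun u v huv => ?_⟩
  · obtain ⟨d, rfl, hd⟩ := hf e he
    obtain ⟨d', rfl, hd'⟩ := hf e' he'
    rw [hφ (hd.trans (hee'.trans hd'.symm))]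
  · obtain ⟨d, -, hd⟩ := hf e he
    exact hd ▸ hφH d
  · obtain ⟨d, hde, hd⟩ := hf s(u, v) huv
    rw [← hd]
    exact ⟨hmem d u (by simp [hde]), hmem d v (by simp [hde])⟩

/-- `ContainsCopy H' H` means that the hypergraph `H` has a subhypergraph isomorphic to `H'`. -/
def ContainsCopy (H' : Finset (Finset β)) (H : Finset (Finset γ)) : Prop :=
  ∃ φ : β ↪ γ, ∀ h ∈ H', h.map φ ∈ H

theorem HasBergeCopy.of_containsCopy {H' : Finset (Finset γ)} (hH : ContainsCopy H H')
    (h : HasBergeCopy G H) : HasBergeCopy G H' := by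
  obtain ⟨φ, hφ⟩ := hH
  obtain ⟨i, f, hi, hf, hfH, hmem⟩ := h
  exact ⟨φ ∘ i, fun e => (f e).map φ, φ.injective.comp hi,
    fun e he e' he' hee' => hf he he' (map_injective φ hee'), fun e he => hφ _ (hfH e he),
    fun u v huv => (hmem u v huv).imp (mem_map_of_mem φ) (mem_map_of_mem φ)⟩

theorem mem_covPairs {p : Finset β} : p ∈ covPairs H ↔ ∃ h ∈ H, p ⊆ h ∧ #p = 2 := by
  simp [covPairs, mem_powersetCard]

theorem ContainsCopy.card_covPairs_le {H' : Finset (Finset γ)} (hH : ContainsCopy H H') :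
    #(covPairs H) ≤ #(covPairs H') := by
  obtain ⟨φ, hφ⟩ := hH
  refine card_le_card_of_injOn (fun p => p.map φ) (fun p hp => ?_) (map_injective φ).injOn
  obtain ⟨h, hh, hph, hp2⟩ := mem_covPairs.1 hp
  exact mem_covPairs.2 ⟨h.map φ, hφ h hh, map_subset_map.2 hph, by rwa [card_map]⟩

theorem card_covPairs_le_choose [Fintype β] (H : Finset (Finset β)) :
    #(covPairs H) ≤ (Fintype.card β).choose 2 := by
  rw [← card_univ, ← card_powersetCard]
  refine card_le_card fun p hp => ?_
  obtain ⟨h, -, -, hp2⟩ := mem_covPairs.1 hp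
  exact mem_powersetCard.2 ⟨subset_univ p, hp2⟩

theorem card_mul_card_le_card_covPairs {ι κ : Type*} [Fintype ι] [Fintype κ] {g : ι → β}
    {g' : κ → β} (hg : Function.Injective g) (hg' : Function.Injective g')
    (hgg' : ∀ i j, g i ≠ g' j) (h : ∀ i j, ∃ h ∈ H, g i ∈ h ∧ g' j ∈ h) :
    Fintype.card ι * Fintype.card κ ≤ #(covPairs H) := by
  rw [← Fintype.card_prod, ← card_univ]
  refine card_le_card_of_injOn (fun p => {g p.1, g' p.2}) (fun p _ => ?_) ?_
  · obtain ⟨e, he, h₁, h₂⟩ := h p.1 p.2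
    exact mem_covPairs.2 ⟨e, he, by simp [insert_subset_iff, h₁, h₂], card_pair (hgg' _ _)⟩
  · rintro ⟨i, j⟩ - ⟨i', j'⟩ - (hij : ({g i, g' j} : Finset β) = {g i', g' j'})
    have hi : g i ∈ ({g i', g' j'} : Finset β) := hij ▸ mem_insert_self _ _
    have hj : g' j ∈ ({g i', g' j'} : Finset β) :=
      hij ▸ mem_insert_of_mem (mem_singleton_self _)
    simp only [mem_insert, mem_singleton, hgg', (hgg' _ _).symm, or_false, false_or] at hi hj
    rw [hg hi, hg' hj]

theorem eq_of_triple_eq {f : β → Fin 3} {τ τ' : Fin 3 → β} (hτ : f ∘ τ = id) (hτ' : f ∘ τ' = id)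
    (h : ({τ 0, τ 1, τ 2} : Finset β) = {τ' 0, τ' 1, τ' 2}) : τ = τ' := by
  funext i
  have hi : τ i ∈ ({τ 0, τ 1, τ 2} : Finset β) := by fin_cases i <;> simp
  obtain ⟨j, hj⟩ : ∃ j, τ i = τ' j := by
    rw [h, mem_insert, mem_insert, mem_singleton] at hi
    rcases hi with hi | hi | hi <;> exact ⟨_, hi⟩
  obtain rfl : i = j := (congrFun hτ i).symm.trans ((congrArg f hj).trans (congrFun hτ' j))
  exact hj

end Containment

section Constructions

variable {ι : Type*} [DecidableEq ι]

theorem matchedTriple_inj {a b a' b' : ι}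
    (h : ({(0, a), (1, a), (2, b)} : Finset (Fin 3 × ι)) = {(0, a'), (1, a'), (2, b')}) :
    a = a' ∧ b = b' := by
  have hτ := eq_of_triple_eq (f := Prod.fst) (τ := ![(0, a), (1, a), (2, b)])
    (τ' := ![(0, a'), (1, a'), (2, b')]) (funext (Fin.forall_fin_succ.2 (by simp)))
    (funext (Fin.forall_fin_succ.2 (by simp))) h
  simpa using hτ

variable (ι) [Fintype ι]

/-- The 3-graph of all triples consisting of an apex `none` and an edge of the complete bipartite
graph between two copies of `ι`. Its Berge subgraphs are obstructed by `C5Blowup`. -/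
def pointedTriples : Finset (Finset (Option (ι ⊕ ι))) :=
  univ.image fun p : ι × ι => {none, some (.inl p.1), some (.inr p.2)}

/-- The 3-graph of all triples consisting of an edge of a perfect matching between two copies of
`ι` and a vertex of a third copy. Its Berge subgraphs are obstructed by `C3BlowupM`. -/
def matchedTriples : Finset (Finset (Fin 3 × ι)) :=
  univ.image fun p : ι × ι => {(0, p.1), (1, p.1), (2, p.2)}

variable {ι}

theorem mem_pointedTriples {h : Finset (Option (ι ⊕ ι))} :
    h ∈ pointedTriples ι ↔ ∃ a b, {none, some (.inl a), some (.inr b)} = h := by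
  simp [pointedTriples]

theorem mem_matchedTriples {h : Finset (Fin 3 × ι)} :
    h ∈ matchedTriples ι ↔ ∃ a b, {(0, a), (1, a), (2, b)} = h := by
  simp [matchedTriples]

theorem card_eq_three_of_mem_pointedTriples {h : Finset (Option (ι ⊕ ι))}
    (hh : h ∈ pointedTriples ι) : #h = 3 := by
  obtain ⟨a, b, rfl⟩ := mem_pointedTriples.1 hh
  simp

theorem card_eq_three_of_mem_matchedTriples {h : Finset (Fin 3 × ι)}
    (hh : h ∈ matchedTriples ι) : #h = 3 := by
  obtain ⟨a, b, rfl⟩ := mem_matchedTriples.1 hh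
  simp [card_insert_of_notMem]

theorem card_sq_le_card_covPairs_pointedTriples :
    Fintype.card ι ^ 2 ≤ #(covPairs (pointedTriples ι)) := by
  rw [sq]
  exact card_mul_card_le_card_covPairs (g := fun a => some (.inl a)) (g' := fun b => some (.inr b))
    (fun a a' => by simp) (fun b b' => by simp) (by simp)
    fun a b => ⟨_, mem_pointedTriples.2 ⟨a, b, rfl⟩, by simp, by simp⟩

theorem card_sq_le_card_covPairs_matchedTriples :
    Fintype.card ι ^ 2 ≤ #(covPairs (matchedTriples ι)) := by
  rw [sq]
  exact card_mul_card_le_card_covPairs (g := fun a => (0, a)) (g' := fun b => (2, b))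
    (fun a a' => by simp) (fun b b' => by simp) (by simp)
    fun a b => ⟨_, mem_matchedTriples.2 ⟨a, b, rfl⟩, by simp, by simp⟩

theorem eq_of_mem_matchedTriples {h : Finset (Fin 3 × ι)} (hh : h ∈ matchedTriples ι) {a b : ι}
    (ha : (0, a) ∈ h ∨ (1, a) ∈ h) (hb : (2, b) ∈ h) : h = {(0, a), (1, a), (2, b)} := by
  obtain ⟨a', b', rfl⟩ := mem_matchedTriples.1 hh
  obtain rfl : a = a' := by simpa using ha
  obtain rfl : b = b' := by simpa using hb
  rfl

end Constructions

section LowerBound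

variable {α : Type*} {G : SimpleGraph α} {t : ℕ}

theorem exists_mem_of_isNClique_three_C3BlowupM {K : Finset (Fin 3 × Fin t)}
    (hK : (C3BlowupM t).IsNClique 3 K) : ∃ a b, (0, a) ∈ K ∧ (1, a) ∈ K ∧ (2, b) ∈ K := by
  have hfst : Set.InjOn Prod.fst (K : Set (Fin 3 × Fin t)) := fun x hx y hy hxy => by
    by_contra hne
    obtain ⟨-, h | h⟩ := hK.isClique hx hy hne <;> omega
  have himage : K.image Prod.fst = univ :=
    eq_univ_of_card _ (by rw [card_image_of_injOn hfst, hK.card_eq, Fintype.card_fin])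
  have hclass : ∀ i, ∃ x, (i, x) ∈ K := fun i => by
    obtain ⟨⟨_, x⟩, hx, rfl⟩ := mem_image.1 (himage ▸ mem_univ i)
    exact ⟨x, hx⟩
  obtain ⟨a, ha⟩ := hclass 0
  obtain ⟨a', ha'⟩ := hclass 1
  obtain ⟨b, hb⟩ := hclass 2
  have hadj := hK.isClique ha ha' (by simp)
  obtain rfl : a = a' := by simpa [C3BlowupM, eq_comm] using hadj
  exact ⟨a, b, ha, ha', hb⟩

theorem C3BlowupM_adj_of_mem_matchedTriples {h : Finset (Fin 3 × Fin t)}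
    (hh : h ∈ matchedTriples (Fin t)) {x y : Fin 3 × Fin t} (hx : x ∈ h) (hy : y ∈ h)
    (hxy : x ≠ y) : (C3BlowupM t).Adj x y := by
  obtain ⟨a, b, rfl⟩ := mem_matchedTriples.1 hh
  simp only [mem_insert, mem_singleton] at hx hy
  rcases hx with rfl | rfl | rfl <;> rcases hy with rfl | rfl | rfl <;> simp_all [C3BlowupM]

theorem isContained_C3BlowupM_of_hasBergeCopy (h : HasBergeCopy G (matchedTriples (Fin t))) :
    G ⊑ C3BlowupM t := by
  obtain ⟨i, f, hi, -, hfH, hmem⟩ := h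
  have hadj : ∀ u v, G.Adj u v → (C3BlowupM t).Adj (i u) (i v) := fun u v huv =>
    C3BlowupM_adj_of_mem_matchedTriples (hfH s(u, v) huv) (hmem u v huv).1 (hmem u v huv).2
      (hi.ne huv.ne)
  exact ⟨⟨⟨i, fun {u v} => hadj u v⟩, hi⟩⟩

theorem cliqueFree_three_of_hasBergeCopy (h : HasBergeCopy G (matchedTriples (Fin t))) :
    G.CliqueFree 3 := by
  classical
  obtain ⟨i, f, hi, hf, hfH, hmem⟩ := h
  intro K hK
  have hmapK : (C3BlowupM t).IsNClique 3 (K.map ⟨i, hi⟩) := by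
    refine ⟨?_, by rw [card_map, hK.card_eq]⟩
    rw [coe_map]
    rintro _ ⟨u, hu, rfl⟩ _ ⟨v, hv, rfl⟩ huv
    have huv' : G.Adj u v := hK.isClique hu hv fun h => huv (h ▸ rfl)
    exact C3BlowupM_adj_of_mem_matchedTriples (hfH _ huv') (hmem u v huv').1 (hmem u v huv').2 huv
  obtain ⟨a, b, h₀, h₁, h₂⟩ := exists_mem_of_isNClique_three_C3BlowupM hmapK
  obtain ⟨p, hpK, hp : i p = (0, a)⟩ := mem_map.1 h₀
  obtain ⟨q, hqK, hq : i q = (1, a)⟩ := mem_map.1 h₁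
  obtain ⟨r, hrK, hr : i r = (2, b)⟩ := mem_map.1 h₂
  have hpr : G.Adj p r := hK.isClique hpK hrK (by rintro rfl; simp [hp] at hr)
  have hqr : G.Adj q r := hK.isClique hqK hrK (by rintro rfl; simp [hq] at hr)
  have hfpr := eq_of_mem_matchedTriples (hfH _ hpr) (.inl (hp ▸ (hmem p r hpr).1))
    (hr ▸ (hmem p r hpr).2)
  have hfqr := eq_of_mem_matchedTriples (hfH _ hqr) (.inr (hq ▸ (hmem q r hqr).1))
    (hr ▸ (hmem q r hqr).2)
  have hpq : p = q := Sym2.congr_left.1 (hf hpr hqr (hfpr.trans hfqr.symm))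
  rw [hpq, hq] at hp
  simp at hp

/-- Sends the two sides of `pointedTriples` into `C5Blowup`: a vertex goes to a class next to the
single vertex precisely when `p` holds. -/
def placeInC5Blowup (p : Prop) [Decidable p] :
    Option (Fin t ⊕ Fin t) → Unit ⊕ Fin 4 × Fin t
  | none => .inl ()
  | some (.inl j) => .inr (if p then 0 else 2, j)
  | some (.inr j) => .inr (if p then 3 else 1, j)

theorem placeInC5Blowup_inj {p q : Prop} [Decidable p] [Decidable q]
    {x y : Option (Fin t ⊕ Fin t)} (h : placeInC5Blowup p x = placeInC5Blowup q y) : x = y := by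
  rcases x with _ | _ | _ <;> rcases y with _ | _ | _ <;> by_cases p <;> by_cases q <;>
    simp_all [placeInC5Blowup]

theorem isContained_C5Blowup_of_hasBergeCopy (h : HasBergeCopy G (pointedTriples (Fin t)))
    (hG : G.CliqueFree 3) : G ⊑ C5Blowup t := by
  classical
  obtain ⟨i, f, hi, -, hfH, hmem⟩ := h
  let nearApex : α → Prop := fun v => ∃ u, G.Adj u v ∧ i u = none
  have hnear : ∀ u v, G.Adj u v → nearApex u → ¬ nearApex v := by
    rintro u v huv ⟨x, hxu, hx⟩ ⟨y, hyv, hy⟩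
    obtain rfl : x = y := hi (hx.trans hy.symm)
    exact hG {x, u, v} (SimpleGraph.is3Clique_triple_iff.2 ⟨hxu, hyv, huv⟩)
  let place : α → Unit ⊕ Fin 4 × Fin t := fun v => placeInC5Blowup (nearApex v) (i v)
  have hplace : ∀ u v, G.Adj u v → (C5Blowup t).Adj (place u) (place v) := by
    intro u v huv
    obtain ⟨a, b, hab⟩ := mem_pointedTriples.1 (hfH s(u, v) huv)
    obtain ⟨hu, hv⟩ := hmem u v huv
    have hne : i u ≠ i v := hi.ne huv.ne
    have huApex : i u = none → nearApex v := fun h => ⟨u, huv, h⟩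
    have hvApex : i v = none → nearApex u := fun h => ⟨v, huv.symm, h⟩
    have hnuv := hnear u v huv
    rw [← hab, mem_insert, mem_insert, mem_singleton] at hu hv
    simp only [place]
    rcases hu with hu | hu | hu <;> rcases hv with hv | hv | hv <;>
      by_cases hpu : nearApex u <;> by_cases hpv : nearApex v <;>
      simp_all [placeInC5Blowup, C5Blowup]
  exact ⟨⟨⟨place, fun {u v} => hplace u v⟩, fun u v huv => hi (placeInC5Blowup_inj huv)⟩⟩

end LowerBound

section UpperBoundMatched

variable {s : ℕ}

theorem cliqueFree_three_C5Blowup : (C5Blowup s).CliqueFree 3 := by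
  intro K hK
  obtain ⟨x, y, z, hxy, hxz, hyz, -⟩ := SimpleGraph.is3Clique_iff.1 hK
  rcases x with ⟨⟩ | ⟨i, a⟩ <;> rcases y with ⟨⟩ | ⟨j, b⟩ <;> rcases z with ⟨⟩ | ⟨k, c⟩ <;>
    simp [C5Blowup] at hxy hxz hyz <;> omega

theorem fst_ne_of_C3BlowupM_adj {x y : Fin 3 × Fin s} (h : (C3BlowupM s).Adj x y) :
    x.1 ≠ y.1 := by
  simp only [C3BlowupM, SimpleGraph.fromRel_adj] at h
  omega

theorem eq_of_C3BlowupM_adj_of_lt {x y : Fin 3 × Fin s} (h : (C3BlowupM s).Adj x y)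
    (hlt : x.1 < y.1) : y.1 = 2 ∨ x.1 = 0 ∧ y.1 = 1 ∧ x.2 = y.2 := by
  simp only [C3BlowupM, SimpleGraph.fromRel_adj] at h
  omega

open scoped Classical in
/-- The copies of the indices of a graph `G ≤ C3BlowupM s` under which `G` embeds into
`matchedTriples`: matched vertices share a copy exactly when they are adjacent in `G`. -/
noncomputable def matchedSlot (G : SimpleGraph (Fin 3 × Fin s)) (x : Fin 3 × Fin s) :
    Fin s ⊕ Fin s :=
  if x.1 = 1 ∧ ¬ G.Adj (0, x.2) x then .inr x.2 else .inl x.2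

variable {G : SimpleGraph (Fin 3 × Fin s)}

theorem snd_eq_of_matchedSlot_eq {x y : Fin 3 × Fin s} (h : matchedSlot G x = matchedSlot G y) :
    x.2 = y.2 := by
  simp only [matchedSlot] at h
  split_ifs at h <;> simpa using h

theorem eq_or_adj_of_matchedSlot_eq {x y : Fin 3 × Fin s} (hx : x.1 ≠ 2) (hy : y.1 ≠ 2)
    (h : matchedSlot G x = matchedSlot G y) : x = y ∨ G.Adj x y := by
  obtain ⟨i, a⟩ := x
  obtain ⟨j, b⟩ := y
  obtain rfl : a = b := snd_eq_of_matchedSlot_eq h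
  fin_cases i <;> fin_cases j <;> simp_all [matchedSlot, G.adj_comm]

theorem hasBergeCopy_matchedTriples_of_le (hG : G ≤ C3BlowupM s) (hfree : G.CliqueFree 3) :
    HasBergeCopy G (matchedTriples (Fin s ⊕ Fin s)) := by
  let D := {q : (Fin 3 × Fin s) × (Fin 3 × Fin s) // G.Adj q.1 q.2 ∧ q.1.1 < q.2.1}
  let third : Fin 3 × Fin s → Fin s ⊕ Fin s := fun y => if y.1 = 2 then .inl y.2 else .inr y.2
  refine hasBergeCopy_of_edge_parametrization (i := fun x => (x.1, matchedSlot G x))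
    (fun x y h => ?_) (fun q : D => s(q.1.1, q.1.2)) (fun e he => ?_)
    (φ := fun q => {(0, matchedSlot G q.1.1), (1, matchedSlot G q.1.1), (2, third q.1.2)})
    ?_ (fun q => mem_matchedTriples.2 ⟨_, _, rfl⟩) ?_
  · exact Prod.ext (Prod.mk.inj h).1 (snd_eq_of_matchedSlot_eq (Prod.mk.inj h).2)
  · induction e with | _ x y
    rcases lt_or_gt_of_ne (fst_ne_of_C3BlowupM_adj (hG he)) with hlt | hlt
    · exact ⟨⟨(x, y), he, hlt⟩, rfl⟩
    · exact ⟨⟨(y, x), G.adj_symm he, hlt⟩, Sym2.eq_swap⟩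
  · rintro ⟨⟨x, y⟩, hxy, hlt⟩ ⟨⟨x', y'⟩, hxy', hlt'⟩ h
    obtain ⟨hslot, hthird⟩ := matchedTriple_inj h
    have hx : x.1 ≠ 2 := (hlt.trans_le (Fin.le_last _)).ne
    have hx' : x'.1 ≠ 2 := (hlt'.trans_le (Fin.le_last _)).ne
    obtain rfl : y = y' := by
      have hy := eq_of_C3BlowupM_adj_of_lt (hG hxy) hlt
      have hy' := eq_of_C3BlowupM_adj_of_lt (hG hxy') hlt'
      simp only [third] at hthird
      split_ifs at hthird <;> simp only [Sum.inl.injEq, Sum.inr.injEq] at hthird <;>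
        exact Prod.ext (by simp_all) hthird
    rcases eq_or_adj_of_matchedSlot_eq hx hx' hslot with rfl | hxx'
    · rfl
    · exact (hfree {x, x', y} (SimpleGraph.is3Clique_triple_iff.2 ⟨hxx', hxy, hxy'⟩)).elim
  · rintro ⟨⟨⟨i, a⟩, ⟨j, b⟩⟩, hxy, hlt⟩ z hz
    dsimp only at hxy hlt hz ⊢
    rcases Sym2.mem_iff.1 hz with rfl | rfl
    · have : i = 0 ∨ i = 1 := by omega
      rcases this with rfl | rfl <;> simp
    · rcases eq_of_C3BlowupM_adj_of_lt (hG hxy) hlt with h | ⟨hi, hj, hab⟩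
      · obtain rfl : j = 2 := h
        simp [matchedSlot, third]
      · obtain ⟨rfl, rfl, rfl⟩ : i = 0 ∧ j = 1 ∧ a = b := ⟨hi, hj, hab⟩
        simp [matchedSlot, hxy]

theorem hasBergeCopy_matchedTriples {α : Type*} {G : SimpleGraph α} (hG : G ⊑ C3BlowupM s)
    (hfree : G.CliqueFree 3) : HasBergeCopy G (matchedTriples (Fin s ⊕ Fin s)) := by
  obtain ⟨g⟩ := hG
  rcases isEmpty_or_nonempty α with hα | hα
  · exact ⟨isEmptyElim, fun _ => ∅, by simp [Function.Injective], by simp, by simp, by simp⟩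
  · exact (hasBergeCopy_matchedTriples_of_le
      ((SimpleGraph.map_le_iff_le_comap _ _ _).2 g.toHom.le_comap)
      (SimpleGraph.cliqueFree_map_iff.2 hfree)).of_isContained
        ⟨(SimpleGraph.Embedding.map g.toEmbedding G).toCopy⟩

end UpperBoundMatched

section UpperBoundC5

variable {V : Type*} {H : Finset (Finset V)} {f : V → Fin 3} {E : Finset (V × V)}
  {c : V × V → V} {s : ℕ}

/-- `c` completes every edge of the bipartite graph `E` to a hyperedge of `H`, in such a way that
these hyperedges meet each class of the tripartition `f` once: `E` joins the classes `0` and `1`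
and `c` takes values in the class `2`. -/
structure IsTripartiteCompletion [DecidableEq V] (H : Finset (Finset V)) (f : V → Fin 3)
    (E : Finset (V × V)) (c : V × V → V) : Prop where
  comp_eq_id : ∀ e ∈ E, f ∘ ![e.1, e.2, c e] = id
  mem : ∀ e ∈ E, {e.1, e.2, c e} ∈ H

namespace IsTripartiteCompletion

variable [DecidableEq V]

theorem apply_fst (hE : IsTripartiteCompletion H f E c) {e : V × V} (he : e ∈ E) : f e.1 = 0 :=
  congrFun (hE.comp_eq_id e he) 0

theorem apply_snd (hE : IsTripartiteCompletion H f E c) {e : V × V} (he : e ∈ E) : f e.2 = 1 :=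
  congrFun (hE.comp_eq_id e he) 1

theorem apply_completion (hE : IsTripartiteCompletion H f E c) {e : V × V} (he : e ∈ E) :
    f (c e) = 2 :=
  congrFun (hE.comp_eq_id e he) 2

theorem mono {E' : Finset (V × V)} (hE : IsTripartiteCompletion H f E c) (h : E' ⊆ E) :
    IsTripartiteCompletion H f E' c :=
  ⟨fun e he => hE.comp_eq_id e (h he), fun e he => hE.mem e (h he)⟩

theorem swap (hE : IsTripartiteCompletion H f E c) :
    IsTripartiteCompletion H (Equiv.swap 0 1 ∘ f) (E.image Prod.swap) (c ∘ Prod.swap) := by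
  refine ⟨fun e he => ?_, fun e he => ?_⟩ <;> obtain ⟨⟨a, b⟩, hab, rfl⟩ := mem_image.1 he
  · have h₀ := hE.apply_fst hab
    have h₁ := hE.apply_snd hab
    have h₂ := hE.apply_completion hab
    funext k
    fin_cases k <;> simp_all [Equiv.swap_apply_of_ne_of_ne]
  · exact insert_comm a b {c (a, b)} ▸ hE.mem _ hab

theorem injOn (hE : IsTripartiteCompletion H f E c) :
    Set.InjOn (fun e => ({e.1, e.2, c e} : Finset V)) E := fun e he e' he' h => by
  have hτ := eq_of_triple_eq (hE.comp_eq_id e he) (hE.comp_eq_id e' he') h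
  exact Prod.ext (congrFun hτ 0) (congrFun hτ 1)

theorem hasBergeCopy (hE : IsTripartiteCompletion H f E c) {α D : Type*} {G : SimpleGraph α}
    {i : α → V} (hi : Function.Injective i) (ends : D → Sym2 α)
    (hends : ∀ e ∈ G.edgeSet, ∃ d, ends d = e) {rep : D → V × V} (hrep : Function.Injective rep)
    (hrepE : ∀ d, rep d ∈ E)
    (hmem : ∀ d, ∀ x ∈ ends d, i x = (rep d).1 ∨ i x = (rep d).2 ∨ i x = c (rep d)) :
    HasBergeCopy G H :=
  hasBergeCopy_of_edge_parametrization hi ends hends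
    (φ := fun d => {(rep d).1, (rep d).2, c (rep d)})
    (fun _ _ h => hrep (hE.injOn (hrepE _) (hrepE _) h)) (fun d => hE.mem _ (hrepE d))
    (fun d x hx => by simpa using hmem d x hx)

end IsTripartiteCompletion

/-- The edges of `C5Blowup s`, listed by the edge of the 5-cycle they come from. -/
inductive C5Edge (s : ℕ)
  | apexFirst (j : Fin s)
  | apexLast (j : Fin s)
  | first (j k : Fin s)
  | middle (j k : Fin s)
  | last (j k : Fin s)

namespace C5Edge

/-- The endpoints of an edge of `C5Blowup s`. -/
def ends : C5Edge s → Sym2 (Unit ⊕ Fin 4 × Fin s)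
  | apexFirst j => s(.inl (), .inr (0, j))
  | apexLast j => s(.inl (), .inr (3, j))
  | first j k => s(.inr (0, j), .inr (1, k))
  | middle j k => s(.inr (1, j), .inr (2, k))
  | last j k => s(.inr (2, j), .inr (3, k))

theorem exists_ends_eq {e : Sym2 (Unit ⊕ Fin 4 × Fin s)} (he : e ∈ (C5Blowup s).edgeSet) :
    ∃ d : C5Edge s, d.ends = e := by
  have horiented : ∀ x y, (C5Blowup s).Adj x y → (∃ d : C5Edge s, d.ends = s(x, y)) := by
    rintro (⟨⟩ | ⟨k, j⟩) (⟨⟩ | ⟨k', j'⟩) hxy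
    · simp at hxy
    · fin_cases k' <;> simp [C5Blowup] at hxy
      · exact ⟨apexFirst j', rfl⟩
      · exact ⟨apexLast j', rfl⟩
    · fin_cases k <;> simp [C5Blowup] at hxy
      · exact ⟨apexFirst j, Sym2.eq_swap⟩
      · exact ⟨apexLast j, Sym2.eq_swap⟩
    · fin_cases k <;> fin_cases k' <;> simp [C5Blowup] at hxy
      · exact ⟨first j j', rfl⟩
      · exact ⟨first j' j, Sym2.eq_swap⟩
      · exact ⟨middle j j', rfl⟩
      · exact ⟨middle j' j, Sym2.eq_swap⟩
      · exact ⟨last j j', rfl⟩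
      · exact ⟨last j' j, Sym2.eq_swap⟩
  induction e with | _ x y
  exact horiented x y he

/-- The pairs whose completions form a Berge copy of `C5Blowup s`, for matched pairs `m` with a
common completion and further vertices `x`, `y` on the two sides. -/
def rep (m : Fin 2 × Fin s → V × V) (x y : Fin s → V) : C5Edge s → V × V
  | apexFirst j => m (0, j)
  | apexLast j => m (1, j)
  | first j k => ((m (0, j)).1, y k)
  | middle j k => (x k, y j)
  | last j k => (x j, (m (1, k)).2)

theorem rep_injective {m : Fin 2 × Fin s → V × V} {x y : Fin s → V}
    (hm₁ : Function.Injective (Prod.fst ∘ m)) (hm₂ : Function.Injective (Prod.snd ∘ m))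
    (hx : Function.Injective x) (hy : Function.Injective y) (hxm : ∀ j p, x j ≠ (m p).1)
    (hym : ∀ j p, y j ≠ (m p).2) : Function.Injective (rep m x y) := by
  have h₁ : ∀ p q, (m p).1 = (m q).1 ↔ p = q := fun p q => hm₁.eq_iff
  have h₂ : ∀ p q, (m p).2 = (m q).2 ↔ p = q := fun p q => hm₂.eq_iff
  rintro (_ | _ | _ | _ | _) (_ | _ | _ | _ | _) h <;>
    simp [rep, Prod.ext_iff, h₁, h₂, hx.eq_iff, hy.eq_iff, hxm, hym, fun j p => (hxm j p).symm,
      fun j p => (hym j p).symm] at h ⊢ <;> simp_all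

end C5Edge

/-- The vertices of the Berge copy of `C5Blowup s` whose edges are given by `C5Edge.rep`. -/
def c5Vertex (v : V) (m : Fin 2 × Fin s → V × V) (x y : Fin s → V) :
    Unit ⊕ Fin 4 × Fin s → V
  | .inl _ => v
  | .inr (k, j) => ![(m (0, j)).1, y j, x j, (m (1, j)).2] k

theorem c5Vertex_injective {v : V} {m : Fin 2 × Fin s → V × V} {x y : Fin s → V}
    (hm₁ : Function.Injective (Prod.fst ∘ m)) (hm₂ : Function.Injective (Prod.snd ∘ m))
    (hx : Function.Injective x) (hy : Function.Injective y) (hxm : ∀ j p, x j ≠ (m p).1)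
    (hym : ∀ j p, y j ≠ (m p).2) (hfm₁ : ∀ p, f (m p).1 = 0) (hfm₂ : ∀ p, f (m p).2 = 1)
    (hfx : ∀ j, f (x j) = 0) (hfy : ∀ j, f (y j) = 1) (hfv : Fin s → f v = 2) :
    Function.Injective (c5Vertex v m x y) := by
  have h₁ : ∀ p q, (m p).1 = (m q).1 ↔ p = q := fun p q => hm₁.eq_iff
  have h₂ : ∀ p q, (m p).2 = (m q).2 ↔ p = q := fun p q => hm₂.eq_iff
  rintro (_ | ⟨k, j⟩) (_ | ⟨k', j'⟩) h
  · rfl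
  · have hcolour := congrArg f h
    fin_cases k' <;> simp [c5Vertex, hfv j', hfm₁, hfm₂, hfx, hfy] at hcolour
  · have hcolour := congrArg f h
    fin_cases k <;> simp [c5Vertex, hfv j, hfm₁, hfm₂, hfx, hfy] at hcolour
  · have hcolour := congrArg f h
    fin_cases k <;> fin_cases k' <;>
      first
      | simp [c5Vertex, hfm₁, hfm₂, hfx, hfy] at hcolour; done
      | revert h
        simp [c5Vertex, h₁, h₂, hx.eq_iff, hy.eq_iff, hxm, hym, fun j p => (hxm j p).symm,
          fun j p => (hym j p).symm]

namespace IsTripartiteCompletion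

variable [DecidableEq V]

theorem hasBergeCopy_C5Blowup (hE : IsTripartiteCompletion H f E c) {v : V}
    {m : Fin 2 × Fin s → V × V} {x y : Fin s → V} (hm₁ : Function.Injective (Prod.fst ∘ m))
    (hm₂ : Function.Injective (Prod.snd ∘ m)) (hx : Function.Injective x)
    (hy : Function.Injective y) (hxm : ∀ j p, x j ≠ (m p).1) (hym : ∀ j p, y j ≠ (m p).2)
    (hrep : ∀ d, C5Edge.rep m x y d ∈ E) (hv : ∀ p, c (m p) = v) :
    HasBergeCopy (C5Blowup s) H := by
  have hmE : ∀ p, m p ∈ E := by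
    rintro ⟨k, j⟩
    fin_cases k
    · exact hrep (.apexFirst j)
    · exact hrep (.apexLast j)
  refine hE.hasBergeCopy (i := c5Vertex v m x y) ?_ C5Edge.ends
    (fun e => C5Edge.exists_ends_eq) (C5Edge.rep_injective hm₁ hm₂ hx hy hxm hym) hrep ?_
  · exact c5Vertex_injective hm₁ hm₂ hx hy hxm hym (fun p => hE.apply_fst (hmE p))
      (fun p => hE.apply_snd (hmE p)) (fun j => hE.apply_fst (hrep (.middle j j)))
      (fun j => hE.apply_snd (hrep (.middle j j)))
      fun j => hv (0, j) ▸ hE.apply_completion (hmE (0, j))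
  · rintro (_ | _ | _ | _ | _) u hu <;> rcases Sym2.mem_iff.1 hu with rfl | rfl <;>
      simp [c5Vertex, C5Edge.rep, hv]

theorem hasBergeCopy_C5Blowup_of_matching (hE : IsTripartiteCompletion H f E c) {v : V}
    {M : Finset (V × V)} (hME : M ⊆ E) (hM₁ : Set.InjOn Prod.fst (M : Set (V × V)))
    (hM₂ : Set.InjOn Prod.snd (M : Set (V × V))) (hMv : ∀ e ∈ M, c e = v) (hM : 2 * s ≤ #M)
    {A B : Finset V} (hA : 3 * s ≤ #A) (hB : 3 * s ≤ #B)
    (hAB : ∀ e ∈ M, A ×ˢ B ⊆ oppositeEdges E e) : HasBergeCopy (C5Blowup s) H := by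
  obtain ⟨m, hm⟩ := Function.Embedding.exists_of_card_le_finset
    (α := Fin 2 × Fin s) (s := M) (by simpa using hM)
  have hmM : ∀ p, m p ∈ M := fun p => hm ⟨p, rfl⟩
  have havoid : ∀ {U : Finset V} (g : Fin 2 × Fin s → V), 3 * s ≤ #U →
      ∃ x : Fin s ↪ V, (∀ j, x j ∈ U) ∧ ∀ j p, x j ≠ g p := fun {U} g hU => by
    have hg : #(univ.image g) ≤ 2 * s := card_image_le.trans (by simp)
    have hcard := le_card_sdiff (univ.image g) U
    obtain ⟨x, hx⟩ := Function.Embedding.exists_of_card_le_finset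
      (α := Fin s) (s := U \ univ.image g) (by rw [Fintype.card_fin]; omega)
    have hx' : ∀ j, x j ∈ U \ univ.image g := fun j => hx ⟨j, rfl⟩
    refine ⟨x, fun j => (mem_sdiff.1 (hx' j)).1, fun j p h => (mem_sdiff.1 (hx' j)).2 ?_⟩
    exact h ▸ mem_image_of_mem g (mem_univ p)
  obtain ⟨x, hxA, hxm⟩ := havoid (Prod.fst ∘ m) hA
  obtain ⟨y, hyB, hym⟩ := havoid (Prod.snd ∘ m) hB
  have hopp : ∀ p j k, (x j, y k) ∈ E ∧ ((m p).1, y k) ∈ E ∧ (x j, (m p).2) ∈ E :=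
    fun p j k => mem_filter.1 (hAB _ (hmM p) (mk_mem_product (hxA j) (hyB k)))
  refine hE.hasBergeCopy_C5Blowup (fun p q h => m.injective (hM₁ (hmM p) (hmM q) h))
    (fun p q h => m.injective (hM₂ (hmM p) (hmM q) h)) x.injective y.injective hxm hym ?_
    (fun p => hMv _ (hmM p))
  rintro (j | j | ⟨j, k⟩ | ⟨j, k⟩ | ⟨j, k⟩)
  · exact hME (hmM _)
  · exact hME (hmM _)
  · exact (hopp (0, j) j k).2.1
  · exact (hopp (0, j) k j).1
  · exact (hopp (1, k) j j).2.2

theorem hasBergeCopy_C5Blowup_of_const {S T : Finset V} {v : V}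
    (hE : IsTripartiteCompletion H f (S ×ˢ T) fun _ => v) (hS : 3 * s ≤ #S) (hT : 3 * s ≤ #T) :
    HasBergeCopy (C5Blowup s) H := by
  have henum : ∀ {U : Finset V}, 3 * s ≤ #U → ∃ x : Fin (2 * s) ↪ V, ∀ j, x j ∈ U :=
    fun {U} hU => by
      obtain ⟨x, hx⟩ := Function.Embedding.exists_of_card_le_finset
        (α := Fin (2 * s)) (s := U) (by rw [Fintype.card_fin]; omega)
      exact ⟨x, fun j => hx ⟨j, rfl⟩⟩
  obtain ⟨x, hx⟩ := henum hS
  obtain ⟨y, hy⟩ := henum hT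
  have hmem : ∀ j, (x j, y j) ∈ S ×ˢ T := fun j => mk_mem_product (hx j) (hy j)
  refine hE.hasBergeCopy_C5Blowup_of_matching (M := univ.image fun j => (x j, y j))
    (fun e he => ?_) ?_ ?_ (fun _ _ => rfl) ?_ hS hT fun e he p hp => ?_
  · obtain ⟨j, -, rfl⟩ := mem_image.1 he
    exact hmem j
  · simpa only [coe_image, coe_univ] using
      (show Function.Injective fun j => (x j, y j).1 from x.injective).injOn.image_of_comp
  · simpa only [coe_image, coe_univ] using
      (show Function.Injective fun j => (x j, y j).2 from y.injective).injOn.image_of_comp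
  · rw [card_image_of_injective _ fun j k h => x.injective (Prod.mk.inj h).1]
    simp
  · obtain ⟨j, -, rfl⟩ := mem_image.1 he
    have := mem_product.1 hp
    simp [oppositeEdges, this.1, this.2, hx, hy]

end IsTripartiteCompletion

end UpperBoundC5

section Dichotomy

variable {V : Type*} [DecidableEq V] {H : Finset (Finset V)} {f : V → Fin 3}
  {E : Finset (V × V)} {c : V × V → V} {s : ℕ}

namespace IsTripartiteCompletion

theorem exchange {Q : Finset (V × V)} {a : V × V → V} (hE : IsTripartiteCompletion H f E c)
    (hQ : ∀ p ∈ Q, (a p, p.2) ∈ E ∧ c (a p, p.2) = p.1) :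
    IsTripartiteCompletion H (Equiv.swap 0 2 ∘ f) Q a := by
  refine ⟨fun p hp => ?_, fun p hp => ?_⟩ <;> obtain ⟨hpE, hpc⟩ := hQ p hp
  · have h₀ := hE.apply_fst hpE
    have h₁ := hE.apply_snd hpE
    have h₂ := hE.apply_completion hpE
    funext k
    fin_cases k <;> simp_all [Equiv.swap_apply_of_ne_of_ne]
  · have hmem := hE.mem _ hpE
    rw [hpc, insert_comm, pair_comm, insert_comm] at hmem
    exact pair_comm p.2 (a p) ▸ hmem

theorem containsCopy_matchedTriples {ι : Type*} [Fintype ι] [DecidableEq ι] {S T : Finset V}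
    {a : V → V} (hE : IsTripartiteCompletion H f (S ×ˢ T) fun p => a p.1)
    (ha : Set.InjOn a S) (hS : Fintype.card ι ≤ #S) (hT : Fintype.card ι ≤ #T) :
    ContainsCopy (matchedTriples ι) H := by
  obtain ⟨σ, hσ⟩ := Function.Embedding.exists_of_card_le_finset hS
  obtain ⟨τ, hτ⟩ := Function.Embedding.exists_of_card_le_finset hT
  have hmem : ∀ i j, (σ i, τ j) ∈ S ×ˢ T := fun i j => mk_mem_product (hσ ⟨i, rfl⟩) (hτ ⟨j, rfl⟩)
  have hσf : ∀ i, f (σ i) = 0 := fun i => hE.apply_fst (hmem i i)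
  have hτf : ∀ i, f (τ i) = 1 := fun i => hE.apply_snd (hmem i i)
  have haf : ∀ i, f (a (σ i)) = 2 := fun i => hE.apply_completion (hmem i i)
  have ha' : ∀ i j, a (σ i) = a (σ j) ↔ i = j := fun i j =>
    ⟨fun h => σ.injective (ha (hσ ⟨i, rfl⟩) (hσ ⟨j, rfl⟩) h), fun h => h ▸ rfl⟩
  refine ⟨⟨fun p => ![σ p.2, a (σ p.2), τ p.2] p.1, ?_⟩, fun h hh => ?_⟩
  · rintro ⟨k, i⟩ ⟨k', i'⟩ h
    have hcolour := congrArg f h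
    fin_cases k <;> fin_cases k' <;>
      first
      | simp [hσf, hτf, haf] at hcolour; done
      | simpa [ha'] using h
  · obtain ⟨i, j, rfl⟩ := mem_matchedTriples.1 hh
    rw [map_insert, map_insert, map_singleton]
    exact pair_comm (τ j) (a (σ i)) ▸ hE.mem _ (hmem i j)

end IsTripartiteCompletion

theorem exists_forall_of_mem_cover {δ : ℝ} (hδ : 0 < δ) (M s : ℕ) (ι : Type*) [Fintype ι]
    [DecidableEq ι] :
    ∃ n₀, ∀ {V : Type*} [Fintype V] [DecidableEq V], n₀ ≤ Fintype.card V →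
      ∀ {H : Finset (Finset V)} {f : V → Fin 3} {E : Finset (V × V)} {c : V × V → V},
      IsTripartiteCompletion H f E c → ∀ {F : V → Finset V}, (∀ v, #(F v) ≤ M) →
      (∀ e ∈ E, e.1 ∈ F (c e)) → δ * (Fintype.card V : ℝ) ^ 2 ≤ #E →
      HasBergeCopy (C5Blowup s) H ∨ ContainsCopy (matchedTriples ι) H := by
  obtain ⟨n₀, hn₀⟩ := exists_product_subset_of_dense (show 0 < δ / (M + 1) by positivity)
    (Fintype.card ι * (3 * s)) (Fintype.card ι + 3 * s)
  refine ⟨n₀ + 1, fun {V} _ _ hV H f E c hE F hF hEF hcard => ?_⟩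
  have : Nonempty V := Fintype.card_pos_iff.1 (by omega)
  obtain ⟨a, ha⟩ := exists_section_card_le_mul_s7 E c hF hEF
  have hdense : δ / (M + 1) * (Fintype.card V * Fintype.card V : ℝ) ≤
      #{p : V × V | (a p.1, p.2) ∈ E ∧ c (a p.1, p.2) = p.1} := by
    rw [div_mul_eq_mul_div, div_le_iff₀ (by positivity), ← sq]
    refine hcard.trans ?_
    exact_mod_cast ha.trans (by nlinarith)
  obtain ⟨S, T, hS, hT, hST⟩ := hn₀ (by omega) (by omega) _ hdense
  have hST' : ∀ p ∈ S ×ˢ T, (a p.1, p.2) ∈ E ∧ c (a p.1, p.2) = p.1 :=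
    fun p hp => (mem_filter.1 (hST hp)).2
  rcases exists_subset_injOn_or_eq_const a hS.ge with
    ⟨S', hS', hS'card, hinj⟩ | ⟨S', hS', hS'card, a₀, ha₀⟩
  · exact .inr ((hE.exchange (a := fun p => a p.1) fun p hp =>
      hST' p (product_subset_product_left hS' hp)).containsCopy_matchedTriples hinj
      hS'card.ge (by omega))
  · exact .inl ((hE.exchange (a := fun _ => a₀) fun p hp =>
      ha₀ p.1 (mem_product.1 hp).1 ▸
        hST' p (product_subset_product_left hS' hp)).hasBergeCopy_C5Blowup_of_const
      hS'card.ge (by omega))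

theorem exists_forall_of_mem_cover_or_mem_cover {δ : ℝ} (hδ : 0 < δ) (M s : ℕ) (ι : Type*)
    [Fintype ι] [DecidableEq ι] :
    ∃ n₀, ∀ {V : Type*} [Fintype V] [DecidableEq V], n₀ ≤ Fintype.card V →
      ∀ {H : Finset (Finset V)} {f : V → Fin 3} {E : Finset (V × V)} {c : V × V → V},
      IsTripartiteCompletion H f E c → ∀ {F₁ F₂ : V → Finset V}, (∀ v, #(F₁ v) ≤ M) →
      (∀ v, #(F₂ v) ≤ M) → (∀ e ∈ E, e.1 ∈ F₁ (c e) ∨ e.2 ∈ F₂ (c e)) →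
      δ * (Fintype.card V : ℝ) ^ 2 ≤ #E →
      HasBergeCopy (C5Blowup s) H ∨ ContainsCopy (matchedTriples ι) H := by
  obtain ⟨n₀, hn₀⟩ := exists_forall_of_mem_cover (half_pos hδ) M s ι
  refine ⟨n₀, fun {V} _ _ hV H f E c hE F₁ F₂ hF₁ hF₂ hEF hcard => ?_⟩
  let E₁ := {e ∈ E | e.1 ∈ F₁ (c e)}
  let E₂ := {e ∈ E | e.2 ∈ F₂ (c e)}
  have hunion : (#E : ℝ) ≤ #E₁ + #E₂ := by
    have : E ⊆ E₁ ∪ E₂ := fun e he => by simpa [E₁, E₂, he] using hEF e he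
    exact_mod_cast (card_le_card this).trans (card_union_le _ _)
  rcases le_or_gt (δ / 2 * (Fintype.card V : ℝ) ^ 2) (#E₁ : ℝ) with h₁ | h₁
  · exact hn₀ hV (hE.mono (filter_subset _ _)) hF₁ (fun e he => (mem_filter.1 he).2) h₁
  · refine hn₀ hV (hE.mono (filter_subset _ _ : E₂ ⊆ E)).swap hF₂ (fun p hp => ?_) ?_
    · obtain ⟨e, he, rfl⟩ := mem_image.1 hp
      simpa using (mem_filter.1 he).2
    · rw [card_image_of_injective _ Prod.swap_injective]
      linarith

theorem exists_forall_hasBergeCopy_C5Blowup_of_matching {ε δ : ℝ} (hε : 0 < ε) (hδ : 0 < δ)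
    (s : ℕ) :
    ∃ M n₀ : ℕ, ∀ {V : Type*} [Fintype V] [DecidableEq V], n₀ ≤ Fintype.card V →
      ∀ {H : Finset (Finset V)} {f : V → Fin 3} {E : Finset (V × V)} {c : V × V → V},
      IsTripartiteCompletion H f E c → ε * (Fintype.card V : ℝ) ^ 2 ≤ #E →
      ∀ (v : V) (I : Finset (V × V)), I ⊆ E → Set.InjOn Prod.fst (I : Set (V × V)) →
      Set.InjOn Prod.snd (I : Set (V × V)) → (∀ e ∈ I, c e = v) →
      (∀ e ∈ I, δ * #E ≤ #(oppositeEdges E e)) → M ≤ #I → HasBergeCopy (C5Blowup s) H := by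
  obtain ⟨M, hM⟩ := exists_nat_ge (4 * s / δ + 2 * s + 1)
  have hsM : 2 * s + 1 ≤ M := by
    have : 0 ≤ 4 * s / δ := by positivity
    exact_mod_cast (by linarith : (2 * s + 1 : ℝ) ≤ M)
  have hδM : (2 * s : ℕ) ≤ δ / 2 * M := by
    have := (div_le_iff₀ hδ).1 (by linarith : 4 * s / δ ≤ M)
    push_cast
    linarith
  have hchoose : 0 < (M.choose (2 * s) : ℝ) := by
    exact_mod_cast Nat.choose_pos (by omega)
  obtain ⟨n₀, hn₀⟩ := exists_product_subset_of_dense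
    (show 0 < δ / 2 * ε / M.choose (2 * s) by positivity) (3 * s) (3 * s)
  refine ⟨M, n₀, fun {V} _ _ hV H f E c hE hcard v I hIE hI₁ hI₂ hIv hIopp hMI => ?_⟩
  obtain ⟨J, hJI, hJ⟩ := exists_subset_card_eq hMI
  obtain ⟨S, hSJ, hS, hScard⟩ := exists_subset_card_eq_mul_card_le_choose_mul_card J E
    (fun e p => p ∈ oppositeEdges E e) (s := 2 * s) hδ.le (card_pos.1 (by omega)) (by omega)
    (by rwa [hJ]) fun e he => by
      rw [filter_mem_eq_inter, inter_eq_right.2 (oppositeEdges_subset E e)]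
      exact hIopp e (hJI he)
  have hdense : δ / 2 * ε / M.choose (2 * s) * (Fintype.card V * Fintype.card V : ℝ) ≤
      #{p ∈ E | ∀ e ∈ S, p ∈ oppositeEdges E e} := by
    rw [div_mul_eq_mul_div, div_le_iff₀ hchoose, mul_assoc, ← sq, mul_comm (#_ : ℝ), ← hJ]
    exact (mul_le_mul_of_nonneg_left hcard (by positivity)).trans (by convert! hScard)
  obtain ⟨A, B, hA, hB, hAB⟩ := hn₀ hV hV _ hdense
  have hSI : S ⊆ I := hSJ.trans hJI
  exact hE.hasBergeCopy_C5Blowup_of_matching (hSI.trans hIE) (hI₁.mono (coe_subset.2 hSI))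
    (hI₂.mono (coe_subset.2 hSI)) (fun e he => hIv e (hSI he)) hS.ge hA.ge hB.ge
    fun e he p hp => (mem_filter.1 (hAB hp)).2 e he

theorem exists_forall_of_isTripartiteCompletion {ε : ℝ} (hε : 0 < ε) (s : ℕ) (ι : Type*)
    [Fintype ι] [DecidableEq ι] :
    ∃ n₀, ∀ {V : Type*} [Fintype V] [DecidableEq V], n₀ ≤ Fintype.card V →
      ∀ {H : Finset (Finset V)} {f : V → Fin 3} {E : Finset (V × V)} {c : V × V → V},
      IsTripartiteCompletion H f E c → ε * (Fintype.card V : ℝ) ^ 2 ≤ #E →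
      HasBergeCopy (C5Blowup s) H ∨ ContainsCopy (matchedTriples ι) H := by
  obtain ⟨M, n₁, hn₁⟩ := exists_forall_hasBergeCopy_C5Blowup_of_matching hε
    (show 0 < ε ^ 2 / 2 by positivity) s
  obtain ⟨n₂, hn₂⟩ := exists_forall_of_mem_cover_or_mem_cover
    (show 0 < ε ^ 3 / 2 by positivity) M s ι
  refine ⟨n₁ + n₂ + 1, fun {V} _ _ hV H f E c hE hcard => ?_⟩
  let E' := {e ∈ E | ε ^ 2 / 2 * #E ≤ #(oppositeEdges E e)}
  have hVpos : 0 < Fintype.card V := by omega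
  have hEpos : (0 : ℝ) < #E := lt_of_lt_of_le (by positivity) hcard
  have hgood : ε ^ 3 / 2 * (Fintype.card V : ℝ) ^ 2 ≤ #E' :=
    calc ε ^ 3 / 2 * (Fintype.card V : ℝ) ^ 2
        = ε ^ 2 / 2 * (ε * (Fintype.card V : ℝ) ^ 2) := by ring
      _ ≤ ε ^ 2 / 2 * #E := by gcongr
      _ ≤ #E' := half_sq_mul_card_le_card_filter_oppositeEdges E hε (by rwa [← sq])
        (card_pos.1 (by exact_mod_cast hEpos))
  choose m hmE hm₁ hm₂ hcover using fun v => exists_maximal_matching {e ∈ E' | c e = v}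
  by_cases hlarge : ∃ v, M ≤ #(m v)
  · obtain ⟨v, hv⟩ := hlarge
    have hm : ∀ e ∈ m v, (e ∈ E ∧ ε ^ 2 / 2 * #E ≤ #(oppositeEdges E e)) ∧ c e = v :=
      fun e he => by simpa only [E', mem_filter] using hmE v he
    exact .inl (hn₁ (by omega) hE hcard v (m v) (fun e he => (hm e he).1.1) (hm₁ v) (hm₂ v)
      (fun e he => (hm e he).2) (fun e he => (hm e he).1.2) hv)
  push Not at hlarge
  exact hn₂ (by omega) (hE.mono (filter_subset _ _)) (fun v => card_image_le.trans (hlarge v).le)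
    (fun v => card_image_le.trans (hlarge v).le)
    (fun e he => hcover (c e) e (mem_filter.2 ⟨he, rfl⟩)) hgood

end Dichotomy

section Uniform

variable {V : Type*} [DecidableEq V] {H : Finset (Finset V)}

theorem exists_injective_triple (hH : ∀ h ∈ H, #h = 3) {p : Finset V} (hp : p ∈ covPairs H) :
    ∃ τ : Fin 3 → V, Function.Injective τ ∧ p = {τ 0, τ 1} ∧ {τ 0, τ 1, τ 2} ∈ H := by
  obtain ⟨h, hh, hph, hp2⟩ := mem_covPairs.1 hp
  obtain ⟨x, hx, rfl⟩ := exists_eq_insert_iff.2 ⟨hph, by rw [hp2, hH h hh]⟩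
  obtain ⟨a, b, hab, rfl⟩ := card_eq_two.1 hp2
  rw [mem_insert, mem_singleton, not_or] at hx
  refine ⟨![a, b, x], ?_, rfl, ?_⟩
  · intro k k' h
    fin_cases k <;> fin_cases k' <;> simp_all
  · rw [insert_comm, pair_comm] at hh
    exact hh

theorem exists_isTripartiteCompletion [Finite V] (hH : ∀ h ∈ H, #h = 3) :
    ∃ f E c, IsTripartiteCompletion H f E c ∧ #(covPairs H) ≤ 27 * #E := by
  rcases (covPairs H).eq_empty_or_nonempty with hempty | ⟨p₀, hp₀⟩
  · exact ⟨fun _ => 0, ∅, Prod.fst, ⟨by simp, by simp⟩, by simp [hempty]⟩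
  have : Nonempty (Fin 3 → V) := (exists_injective_triple hH hp₀).nonempty
  choose! τ hτ hpτ hτH using fun p => exists_injective_triple hH (p := p)
  obtain ⟨f, hf⟩ := exists_card_le_mul_card_filter_comp_eq (covPairs H) τ hτ
    (id : Fin 3 → Fin 3)
  let P := {p ∈ covPairs H | f ∘ τ p = id}
  have hinj : Set.InjOn (fun p => (τ p 0, τ p 1)) (P : Set (Finset V)) := fun p hp q hq hpq => by
    rw [hpτ p (mem_filter.1 hp).1, hpτ q (mem_filter.1 hq).1, (Prod.mk.inj hpq).1,
      (Prod.mk.inj hpq).2]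
  have htriple : ∀ p ∈ P, ![τ p 0, τ p 1, τ {τ p 0, τ p 1} 2] = τ p := fun p hp => by
    rw [← hpτ p (mem_filter.1 hp).1]
    funext k
    fin_cases k <;> rfl
  refine ⟨f, P.image fun p => (τ p 0, τ p 1), fun e => τ {e.1, e.2} 2, ⟨?_, ?_⟩, ?_⟩
  · intro e he
    obtain ⟨p, hp, rfl⟩ := mem_image.1 he
    rw [htriple p hp]
    exact (mem_filter.1 hp).2
  · intro e he
    obtain ⟨p, hp, rfl⟩ := mem_image.1 he
    have hp' := (mem_filter.1 hp).1
    rw [← hpτ p hp']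
    exact hτH p hp'
  · rw [card_image_of_injOn hinj]
    simpa using hf

end Uniform

theorem exists_forall_hasBergeCopy {α : Type*} {G : SimpleGraph α} {s : ℕ}
    (h₅ : G ⊑ C5Blowup s) (h₃ : G ⊑ C3BlowupM s) {ε : ℝ} (hε : 0 < ε) :
    ∃ n₀, ∀ {V : Type*} [Fintype V] [DecidableEq V], n₀ ≤ Fintype.card V →
      ∀ {H : Finset (Finset V)}, (∀ h ∈ H, #h = 3) →
      ε * (Fintype.card V : ℝ) ^ 2 ≤ #(covPairs H) → HasBergeCopy G H := by
  obtain ⟨n₀, hn₀⟩ := exists_forall_of_isTripartiteCompletion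
    (show 0 < ε / 27 by positivity) s (Fin s ⊕ Fin s)
  refine ⟨n₀, fun {V} _ _ hV H hH hcard => ?_⟩
  obtain ⟨f, E, c, hE, hcovE⟩ := exists_isTripartiteCompletion hH
  have hdense : ε / 27 * (Fintype.card V : ℝ) ^ 2 ≤ #E := by
    have : (#(covPairs H) : ℝ) ≤ 27 * #E := by exact_mod_cast hcovE
    linarith
  have hfree : G.CliqueFree 3 := .comap h₅ cliqueFree_three_C5Blowup
  rcases hn₀ hV hE hdense with h | h
  · exact h.of_isContained h₅
  · exact (hasBergeCopy_matchedTriples h₃ hfree).of_containsCopy h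

section CoverTuran

open Filter

variable {α : Type*} {G : SimpleGraph α}

theorem coverTuranNumber_le_iff {R : Set ℕ} {n m : ℕ} :
    coverTuranNumber R n G ≤ m ↔ ∀ H : Finset (Finset (Fin n)), (∀ h ∈ H, #h ∈ R) →
      ¬HasBergeCopy G H → #(covPairs H) ≤ m := by
  have hbdd : BddAbove {m | ∃ H : Finset (Finset (Fin n)),
      (∀ h ∈ H, #h ∈ R) ∧ ¬HasBergeCopy G H ∧ m = #(covPairs H)} :=
    ⟨(Fintype.card (Fin n)).choose 2, by
      rintro m ⟨H, -, -, rfl⟩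
      exact card_covPairs_le_choose H⟩
  rw [coverTuranNumber, csSup_le_iff' hbdd]
  exact ⟨fun h H hH hG => h _ ⟨H, hH, hG, rfl⟩, by rintro h _ ⟨H, hH, hG, rfl⟩; exact h H hH hG⟩

theorem coverTuranNumber_le_choose (R : Set ℕ) (n : ℕ) (G : SimpleGraph α) :
    coverTuranNumber R n G ≤ n.choose 2 :=
  coverTuranNumber_le_iff.2 fun H _ _ => by simpa using card_covPairs_le_choose H

theorem coverTuranDensity_eq_zero_iff_eventually_le {k : ℕ} :
    coverTuranDensity k G = 0 ↔
      ∀ δ > (0 : ℝ), ∀ᶠ n : ℕ in atTop, (coverTuranNumber {k} n G : ℝ) ≤ δ * (n : ℝ) ^ 2 := by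
  refine ⟨fun h δ hδ => ?_, fun h => Tendsto.limsup_eq ?_⟩
  · have hbdd : ∀ n : ℕ, (coverTuranNumber {k} n G : ℝ) / (n.choose 2 : ℝ) ≤ 1 := fun n =>
      div_le_one_of_le₀ (by exact_mod_cast coverTuranNumber_le_choose {k} n G) (by positivity)
    filter_upwards [eventually_lt_of_limsup_lt (h.trans_lt hδ) (isBoundedUnder_of ⟨1, hbdd⟩),
      eventually_ge_atTop 2] with n hn hn2
    have hchoose : (0 : ℝ) < n.choose 2 := by exact_mod_cast Nat.choose_pos hn2
    refine ((div_lt_iff₀ hchoose).1 hn).le.trans (mul_le_mul_of_nonneg_left ?_ hδ.le)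
    exact_mod_cast n.choose_le_pow 2
  · refine Metric.tendsto_nhds.2 fun δ hδ => ?_
    filter_upwards [h (δ / 8) (by positivity), eventually_ge_atTop 2] with n hn hn2
    have hn2' : (2 : ℝ) ≤ n := by exact_mod_cast hn2
    have hchoose : (n : ℝ) ^ 2 / 4 ≤ n.choose 2 := by
      rw [Nat.cast_choose_two]
      nlinarith
    have hpos : (0 : ℝ) < n.choose 2 := lt_of_lt_of_le (by positivity) hchoose
    rw [Real.dist_eq, sub_zero, abs_of_nonneg (by positivity), div_lt_iff₀ hpos]
    calc (coverTuranNumber {k} n G : ℝ) ≤ δ / 2 * ((n : ℝ) ^ 2 / 4) := by linarith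
      _ ≤ δ / 2 * n.choose 2 := by gcongr
      _ < δ * n.choose 2 := by gcongr; linarith

theorem coverTuranDensity_eq_zero_iff {k : ℕ} :
    coverTuranDensity k G = 0 ↔ ∀ δ > (0 : ℝ), ∀ᶠ n : ℕ in atTop,
      ∀ H : Finset (Finset (Fin n)), (∀ h ∈ H, #h = k) → ¬HasBergeCopy G H →
        (#(covPairs H) : ℝ) ≤ δ * (n : ℝ) ^ 2 := by
  rw [coverTuranDensity_eq_zero_iff_eventually_le]
  refine forall₂_congr fun δ hδ => eventually_congr (Eventually.of_forall fun n => ?_)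
  rw [← Nat.le_floor_iff (by positivity), coverTuranNumber_le_iff]
  simp only [Nat.le_floor_iff (show 0 ≤ δ * (n : ℝ) ^ 2 by positivity), Set.mem_singleton_iff]

theorem exists_forall_hasBergeCopy_of_coverTuranDensity_eq_zero {k : ℕ}
    (hG : coverTuranDensity k G = 0) {δ : ℝ} (hδ : 0 < δ) :
    ∃ n₀, ∀ {W : Type*} [Fintype W] [DecidableEq W], n₀ ≤ Fintype.card W →
      ∀ {H : Finset (Finset W)}, (∀ h ∈ H, #h = k) →
      δ * (Fintype.card W : ℝ) ^ 2 < #(covPairs H) → HasBergeCopy G H := by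
  obtain ⟨n₀, hn₀⟩ := eventually_atTop.1 (coverTuranDensity_eq_zero_iff.1 hG δ hδ)
  refine ⟨n₀, fun {W} _ _ hW H hH hcard => ?_⟩
  let e := Fintype.equivFin W
  let H' := H.image fun h => h.map e.toEmbedding
  have hHH' : ContainsCopy H H' := ⟨e.toEmbedding, fun h hh => mem_image_of_mem _ hh⟩
  have hH'H : ContainsCopy H' H := ⟨e.symm.toEmbedding, fun h hh => by
    obtain ⟨g, hg, rfl⟩ := mem_image.1 hh
    simpa [Finset.map_map] using hg⟩
  have hunif : ∀ h ∈ H', #h = k := fun h hh => by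
    obtain ⟨g, hg, rfl⟩ := mem_image.1 hh
    rw [card_map, hH g hg]
  by_contra hfree
  have hle := hn₀ _ hW H' hunif fun h => hfree (h.of_containsCopy hH'H)
  exact absurd hcard (not_lt.2 (le_trans (by exact_mod_cast hHH'.card_covPairs_le) hle))

end CoverTuran

theorem exists_isContained_of_coverTuranDensity_eq_zero {α : Type*} {G : SimpleGraph α}
    (hG : coverTuranDensity 3 G = 0) : ∃ s, 0 < s ∧ G ⊑ C5Blowup s ∧ G ⊑ C3BlowupM s := by
  obtain ⟨t, ht⟩ := exists_forall_hasBergeCopy_of_coverTuranDensity_eq_zero hG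
    (show (0 : ℝ) < 1 / 10 by norm_num)
  have hlt : ∀ N : ℕ, N ≤ 3 * (t + 1) → 1 / 10 * (N : ℝ) ^ 2 < ((t + 1) ^ 2 : ℕ) := fun N hN => by
    have : (N : ℝ) ≤ 3 * (t + 1) := by exact_mod_cast hN
    push_cast
    nlinarith [(Nat.cast_nonneg N : (0 : ℝ) ≤ N)]
  have hpointed : HasBergeCopy G (pointedTriples (Fin (t + 1))) :=
    ht (by simp; omega) (fun h => card_eq_three_of_mem_pointedTriples)
      ((hlt _ (by simp; omega)).trans_le (by
        exact_mod_cast Fintype.card_fin (t + 1) ▸ card_sq_le_card_covPairs_pointedTriples))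
  have hmatched : HasBergeCopy G (matchedTriples (Fin (t + 1))) :=
    ht (by simp; omega) (fun h => card_eq_three_of_mem_matchedTriples)
      ((hlt _ (by simp)).trans_le (by
        exact_mod_cast Fintype.card_fin (t + 1) ▸ card_sq_le_card_covPairs_matchedTriples))
  exact ⟨t + 1, t.succ_pos, isContained_C5Blowup_of_hasBergeCopy hpointed
    (cliqueFree_three_of_hasBergeCopy hmatched), isContained_C3BlowupM_of_hasBergeCopy hmatched⟩

theorem coverTuranDensity_eq_zero_of_isContained {α : Type*} {G : SimpleGraph α} {s : ℕ}
    (h₅ : G ⊑ C5Blowup s) (h₃ : G ⊑ C3BlowupM s) : coverTuranDensity 3 G = 0 := by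
  refine coverTuranDensity_eq_zero_iff.2 fun δ hδ => ?_
  obtain ⟨n₀, hn₀⟩ := exists_forall_hasBergeCopy h₅ h₃ hδ
  filter_upwards [Filter.eventually_ge_atTop n₀] with n hn H hH hfree
  by_contra! hlt
  exact hfree (hn₀ (by simpa using hn) hH (by simpa using hlt.le))

theorem stmt7_general {α : Type*} (G : SimpleGraph α) :
    coverTuranDensity 3 G = 0 ↔
      ∃ s : ℕ, 0 < s ∧
        (∃ f : G →g C5Blowup s, Function.Injective f) ∧
        (∃ f : G →g C3BlowupM s, Function.Injective f) := by
  constructor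
  · intro hG
    obtain ⟨s, hs, ⟨f₅⟩, ⟨f₃⟩⟩ := exists_isContained_of_coverTuranDensity_eq_zero hG
    exact ⟨s, hs, ⟨f₅.toHom, f₅.injective⟩, ⟨f₃.toHom, f₃.injective⟩⟩
  · rintro ⟨s, -, ⟨f₅, hf₅⟩, ⟨f₃, hf₃⟩⟩
    exact coverTuranDensity_eq_zero_of_isContained ⟨⟨f₅, hf₅⟩⟩ ⟨⟨f₃, hf₃⟩⟩

theorem stmt7 {α : Type*} [Fintype α] (G : SimpleGraph α) :
    coverTuranDensity 3 G = 0 ↔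
      ∃ s : ℕ, 0 < s ∧
        (∃ f : G →g C5Blowup s, Function.Injective f) ∧
        (∃ f : G →g C3BlowupM s, Function.Injective f) :=
  stmt7_general G
end
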